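/- Let r ≥ 4 and let p > 4 be prime, and let V be a quasi-Hermitian variety of PG(r,p^2) whose characteristic vector v^V belongs to C_p. If π is a plane of PG(r,p^2) with |π ∩ V| ≤ p^3 + p^2 + p + 1, then π ∩ V is either a classical unital of π, or a single line of π, or the union of p+1 distinct lines of π all passing through a common point. -/

import Mathlib

/-!
Common framework: `ProjPoint F n` is the set of points of the projective space
PG(n-1, |F|) (so PG(r, q²) corresponds to `n = r + 1` and `Fintype.card F = q ^ 2`).
Projective subspaces of projective dimension `k` are the submodules of `Fin n → F`
of `finrank` equal to `k + 1`; lines have finrank 2, planes finrank 3 and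
hyperplanes finrank `n - 1 = r`.
-/

open Module Matrix

/-- The points of the projective space PG(n-1, |F|): one-dimensional subspaces
of `F^n`. -/
def ProjPoint (F : Type) [Field F] (n : ℕ) : Type :=
  {W : Submodule F (Fin n → F) // finrank F W = 1}

/-- The set of projective points lying in a given subspace `W`. -/
def pointsIn (F : Type) [Field F] (n : ℕ) (W : Submodule F (Fin n → F)) :
    Set (ProjPoint F n) :=
  {P | P.1 ≤ W}

/-- The number of points of `V` lying in the subspace `W`. -/
noncomputable def secant (F : Type) [Field F] (n : ℕ) (V : Set (ProjPoint F n))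
    (W : Submodule F (Fin n → F)) : ℕ :=
  (V ∩ pointsIn F n W).ncard

/-- The characteristic vector of a set of projective points, with values in `F_p`. -/
noncomputable def charVec (F : Type) [Field F] (p n : ℕ) (S : Set (ProjPoint F n)) :
    ProjPoint F n → ZMod p :=
  Set.indicator S 1

/-- `C_p`: the `F_p`-code spanned by the characteristic vectors of hyperplanes. -/
def hypCode (F : Type) [Field F] (p n : ℕ) :
    Submodule (ZMod p) (ProjPoint F n → ZMod p) :=
  Submodule.span (ZMod p)
    {v | ∃ H : Submodule F (Fin n → F), finrank F H = n - 1 ∧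
      v = charVec F p n (pointsIn F n H)}

/-- A quasi-Hermitian variety of PG(r, q²): it has the size of a non-singular
Hermitian variety and the same two intersection numbers with hyperplanes.
(All identities are stated multiplied through by `q² - 1`.) -/
def IsQuasiHermitian (F : Type) [Field F] (q r : ℕ)
    (V : Set (ProjPoint F (r + 1))) : Prop :=
  (V.ncard : ℤ) * ((q : ℤ) ^ 2 - 1)
      = ((q : ℤ) ^ (r + 1) + (-1) ^ r) * ((q : ℤ) ^ r - (-1) ^ r) ∧
  ∀ H : Submodule F (Fin (r + 1) → F), finrank F H = r →
    ((secant F (r + 1) V H : ℤ) * ((q : ℤ) ^ 2 - 1)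
        = ((q : ℤ) ^ r + (-1) ^ (r - 1)) * ((q : ℤ) ^ (r - 1) - (-1) ^ (r - 1)) ∨
     (secant F (r + 1) V H : ℤ) * ((q : ℤ) ^ 2 - 1)
        = ((q : ℤ) ^ 2 - 1)
          + (q : ℤ) ^ 2 * (((q : ℤ) ^ (r - 1) + (-1) ^ r) * ((q : ℤ) ^ (r - 2) - (-1) ^ r)))

/-- The zero set, in PG(n-1,|F|), of the Hermitian form `x ↦ xᵀ A x^(q)`. -/
def hermSet (F : Type) [Field F] (q n : ℕ) (A : Matrix (Fin n) (Fin n) F) :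
    Set (ProjPoint F n) :=
  {P | ∀ x ∈ P.1, ∑ i, ∑ j, x i * A i j * (x j) ^ q = 0}

/-- A non-singular Hermitian variety of PG(n-1, q²). -/
def IsNonsingHermitian (F : Type) [Field F] (q n : ℕ)
    (V : Set (ProjPoint F n)) : Prop :=
  ∃ A : Matrix (Fin n) (Fin n) F, IsUnit A.det ∧
    Aᵀ = A.map (fun a => a ^ q) ∧ V = hermSet F q n A

/-- A singular Hermitian variety of PG(n-1, q²) whose singular space (the radical
of the Hermitian form) has projective dimension `d`. -/
def IsSingularHermitian (F : Type) [Field F] (q n d : ℕ)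
    (S : Set (ProjPoint F n)) : Prop :=
  ∃ A : Matrix (Fin n) (Fin n) F,
    Aᵀ = A.map (fun a => a ^ q) ∧
    finrank F (LinearMap.ker (Matrix.toLin' Aᵀ)) = d + 1 ∧
    S = hermSet F q n A

/-- A `d`-singular quasi-Hermitian variety of PG(r, q²). -/
def IsSingularQuasiHermitian (F : Type) [Field F] (q r d : ℕ)
    (S : Set (ProjPoint F (r + 1))) : Prop :=
  ∃ S₀ : Set (ProjPoint F (r + 1)), IsSingularHermitian F q (r + 1) d S₀ ∧
    S.ncard = S₀.ncard ∧
    ∀ H : Submodule F (Fin (r + 1) → F), finrank F H = r →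
      ∃ H₀ : Submodule F (Fin (r + 1) → F), finrank F H₀ = r ∧
        secant F (r + 1) S H = secant F (r + 1) S₀ H₀

/-- `U` is a classical unital (Hermitian curve) of the plane `π` of PG(n-1, q²):
in some coordinatization `e` of `π`, it is the zero set of a non-degenerate
Hermitian form on `F³`. -/
def IsClassicalUnital (F : Type) [Field F] (q n : ℕ)
    (π : Submodule F (Fin n → F)) (U : Set (ProjPoint F n)) : Prop :=
  ∃ e : (Fin 3 → F) →ₗ[F] (Fin n → F), LinearMap.ker e = ⊥ ∧ LinearMap.range e = π ∧
    ∃ A : Matrix (Fin 3) (Fin 3) F, IsUnit A.det ∧ Aᵀ = A.map (fun a => a ^ q) ∧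
      U = {P | ∃ y : Fin 3 → F, y ≠ 0 ∧ P.1 = Submodule.span F {e y} ∧
        ∑ i, ∑ j, y i * A i j * (y j) ^ q = 0}

/-
Write `q = p ^ 2`. Membership in the code says that the indicator of the complement of the cone of
`V` is `∑ i, a i * f i y ^ (q - 1)` for linear forms `f i`. For a point `P` of the plane off `V`,
expand this along `v + T • P`: the coefficient of `T ^ (q - 1 - k)` is a form of degree `k` in `v`
and, for `0 < k < q - 1`, it is the `k`-th power sum of the parameters `T` of the points of `V` on
that line. Hence a form vanishing on more lines through `P` than its degree vanishes identically.
Every line through `P` meets `V` in `1` modulo `p` points, so the size bound forces most of them to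
meet `V` in `1` or `p + 1` points. Normalize the first power sum to `0`.

If for every `P` the second power sum vanishes as well, then so do all those below `p`, and the
points on the lines through `P` are given by `T ^ (p + 1) = N v`, where `N` is a form of degree
`p + 1` with `N ^ p = N`, hence Hermitian.

Otherwise, fix `P` with a nonzero second power sum. At most two lines through `P` are tangent, so
almost all are `(p + 1)`-secants. Newton's identities express, up to the factor given by the second
power sum, the polynomial with these `p + 1` roots as a form of degree `p + 3` in `(v, T)`. A line
with more than `p + 5` points of `V` makes it vanish identically on that line, and is then contained
in `V`. So lines are either contained in `V` or short, and counting shows that the plane section is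
a line or a pencil of `p + 1` lines.
-/

namespace HyperplaneCode

open Finset
open scoped Classical

section FiniteField

variable {F : Type*} [Field F]

theorem sub_pow_char_pow_sub_one (p : ℕ) [Fact p.Prime] [CharP F p] {n : ℕ} (hn : n ≠ 0) (z w : F) :
    (z - w) ^ (p ^ n - 1) = ∑ k ∈ range (p ^ n), z ^ (p ^ n - 1 - k) * w ^ k := by
  have hpn : 1 < p ^ n := Nat.one_lt_pow hn (Fact.out : p.Prime).one_lt
  by_cases h : z = w
  · subst h
    have hterm : ∀ k ∈ range (p ^ n), z ^ (p ^ n - 1 - k) * z ^ k = z ^ (p ^ n - 1) :=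
        fun k hk => by rw [← pow_add, Nat.sub_add_cancel (Nat.le_sub_one_of_lt (mem_range.1 hk))]
    rw [sub_self, zero_pow (by omega), sum_congr rfl hterm, sum_const, card_range, nsmul_eq_mul,
      Nat.cast_pow, CharP.cast_eq_zero, zero_pow hn, zero_mul]
  · refine mul_right_cancel₀ (sub_ne_zero.2 h) ?_
    rw [← pow_succ, Nat.sub_add_cancel hpn.le, sub_pow_char_pow]
    calc z ^ p ^ n - w ^ p ^ n = -(w ^ p ^ n - z ^ p ^ n) := (neg_sub _ _).symm
      _ = -((∑ k ∈ range (p ^ n), w ^ k * z ^ (p ^ n - 1 - k)) * (w - z)) := by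
        rw [(Commute.all w z).geom_sum₂_mul]
      _ = _ := by
        simp only [mul_comm (w ^ _)]
        ring

variable [Fintype F]

local notation "q" => Fintype.card F

theorem sub_pow_card_sub_one (z w : F) :
    (z - w) ^ (q - 1) = ∑ k ∈ range q, z ^ (q - 1 - k) * w ^ k := by
  obtain ⟨p, _, n, hp, hq⟩ := FiniteField.card' F
  have := Fact.mk hp
  rw [hq, sub_pow_char_pow_sub_one p n.ne_zero]

theorem pow_card_sub_one_eq_ite (x : F) : x ^ (q - 1) = if x = 0 then 0 else 1 := by
  split_ifs with h
  · rw [h, zero_pow (Nat.sub_ne_zero_of_lt Fintype.one_lt_card)]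
  · exact FiniteField.pow_card_sub_one_eq_one x h

theorem eq_of_forall_sum_mul_pow_eq {c d : ℕ → F}
    (h : ∀ T : F, ∑ k ∈ range q, c k * T ^ (q - 1 - k) = ∑ k ∈ range q, d k * T ^ (q - 1 - k))
    {k : ℕ} (hk : k < q) : c k = d k := by
  have hzero : ∑ k ∈ range q, Polynomial.C (c k - d k) * Polynomial.X ^ (q - 1 - k) = 0 := by
    refine Polynomial.eq_zero_of_natDegree_lt_card_of_eval_eq_zero' _ univ (fun T _ => ?_) ?_
    · simp only [Polynomial.eval_finsetSum, Polynomial.eval_mul, Polynomial.eval_C,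
        Polynomial.eval_pow, Polynomial.eval_X, sub_mul, sum_sub_distrib, h T, sub_self]
    · refine lt_of_le_of_lt (Polynomial.natDegree_sum_le_of_forall_le (n := q - 1) _ _ fun k _ =>
        (Polynomial.natDegree_C_mul_X_pow_le _ _).trans (Nat.sub_le _ _)) ?_
      exact Nat.sub_lt Fintype.card_pos one_pos
  have hcoeff := congrArg (fun f => Polynomial.coeff f (q - 1 - k)) hzero
  simp only [Polynomial.finsetSum_coeff, Polynomial.coeff_C_mul, Polynomial.coeff_X_pow,
    Polynomial.coeff_zero] at hcoeff
  rw [sum_eq_single_of_mem k (mem_range.2 hk), if_pos rfl, mul_one] at hcoeff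
  · exact sub_eq_zero.1 hcoeff
  · intro j hj hjk
    have := mem_range.1 hj
    rw [if_neg (by omega), mul_zero]

/- The indicator of the complement of `A` is `1 - ∑ a ∈ A, (1 - (T - a) ^ (q - 1))`. -/
theorem eq_sum_pow_of_sum_mul_pow_eq_ite {c : ℕ → F} {A : Finset F}
    (h : ∀ T : F, ∑ k ∈ range q, c k * T ^ (q - 1 - k) = if T ∈ A then 0 else 1)
    {k : ℕ} (hk : k < q) :
    c k = ∑ a ∈ A, a ^ k + if k = q - 1 then 1 - (A.card : F) else 0 := by
  refine eq_of_forall_sum_mul_pow_eq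
    (d := fun k => ∑ a ∈ A, a ^ k + if k = q - 1 then 1 - (A.card : F) else 0) (fun T => ?_) hk
  have hsum : ∑ k ∈ range q, (∑ a ∈ A, a ^ k) * T ^ (q - 1 - k)
      = ∑ a ∈ A, (T - a) ^ (q - 1) := by
    simp only [sum_mul, sub_pow_card_sub_one]
    rw [sum_comm]
    simp only [mul_comm]
  simp only [add_mul, sum_add_distrib, hsum, ite_mul, zero_mul]
  rw [sum_ite_eq' (range q), if_pos (mem_range.2 (Nat.sub_lt Fintype.card_pos one_pos)),
    Nat.sub_self, pow_zero, mul_one, h T]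
  simp only [pow_card_sub_one_eq_ite, sub_eq_zero]
  have hcount : ∑ a ∈ A, (if T = a then (0 : F) else 1)
      = A.card - if T ∈ A then 1 else 0 := by
    rw [eq_sub_iff_add_eq, ← sum_ite_eq A T fun _ => (1 : F), ← sum_add_distrib,
      card_eq_sum_ones, Nat.cast_sum]
    exact sum_congr rfl fun a _ => by split_ifs <;> simp
  rw [hcount]
  split_ifs <;> ring

end FiniteField

section BinaryForm

variable {F : Type*} [Field F]

/-- The functions on `F × F` given by binary forms of degree `k`. -/
def binaryForm (F : Type*) [Field F] (k : ℕ) : Submodule F (F × F → F) :=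
  Submodule.span F {f | ∃ i j, i + j = k ∧ f = fun x => x.1 ^ i * x.2 ^ j}

theorem monomial_mem_binaryForm (i j : ℕ) :
    (fun x : F × F => x.1 ^ i * x.2 ^ j) ∈ binaryForm F (i + j) :=
  Submodule.subset_span ⟨i, j, rfl, rfl⟩

theorem const_mem_binaryForm (a : F) : (fun _ => a) ∈ binaryForm F 0 := by
  have h := (binaryForm F 0).smul_mem a (monomial_mem_binaryForm 0 0)
  convert h using 2
  simp

theorem mul_mem_binaryForm {k l : ℕ} {f g : F × F → F} (hf : f ∈ binaryForm F k)
    (hg : g ∈ binaryForm F l) : f * g ∈ binaryForm F (k + l) := by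
  have h := Submodule.mul_mem_mul hf hg
  rw [binaryForm, binaryForm, Submodule.span_mul_span] at h
  refine Submodule.span_le.2 ?_ h
  rintro _ ⟨_, ⟨i, j, rfl, rfl⟩, _, ⟨i', j', rfl, rfl⟩, rfl⟩
  refine Submodule.subset_span ⟨i + i', j + j', by ring, ?_⟩
  ext x
  simp only [Pi.mul_apply]
  ring

theorem linear_mem_binaryForm (a b : F) : (fun x => a * x.1 + b * x.2) ∈ binaryForm F 1 := by
  have h₁ := (binaryForm F 1).smul_mem a (monomial_mem_binaryForm 1 0)
  have h₂ := (binaryForm F 1).smul_mem b (monomial_mem_binaryForm 0 1)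
  convert (binaryForm F 1).add_mem h₁ h₂ using 2
  simp

theorem pow_mem_binaryForm {k : ℕ} {f : F × F → F} (hf : f ∈ binaryForm F k) (n : ℕ) :
    f ^ n ∈ binaryForm F (n * k) := by
  induction n with
  | zero =>
    rw [pow_zero, zero_mul]
    exact const_mem_binaryForm 1
  | succ n ih =>
    rw [pow_succ, Nat.succ_mul]
    exact mul_mem_binaryForm ih hf

theorem apply_smul_of_mem_binaryForm {k : ℕ} {f : F × F → F} (hf : f ∈ binaryForm F k) (a : F)
    (x : F × F) : f (a • x) = a ^ k * f x := by
  induction hf using Submodule.span_induction with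
  | mem f hf =>
    obtain ⟨i, j, rfl, rfl⟩ := hf
    simp only [Prod.smul_fst, Prod.smul_snd, smul_eq_mul]
    ring
  | zero => simp
  | add f g _ _ hf hg => simp only [Pi.add_apply, hf, hg, mul_add]
  | smul b f _ hf => simp only [Pi.smul_apply, smul_eq_mul, hf]; ring

theorem exists_dehomogenization {k : ℕ} {f : F × F → F} (hf : f ∈ binaryForm F k) :
    ∃ e : Polynomial F, e.natDegree ≤ k ∧ (∀ s, f (s, 1) = e.eval s) ∧ f (1, 0) = e.coeff k := by
  induction hf using Submodule.span_induction with
  | mem f hf =>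
    obtain ⟨i, j, rfl, rfl⟩ := hf
    refine ⟨Polynomial.X ^ i, by simp, fun s => by simp, ?_⟩
    rw [Polynomial.coeff_X_pow]
    rcases Nat.eq_zero_or_pos j with rfl | hj
    · simp
    · simp [hj.ne']
  | zero => exact ⟨0, by simp⟩
  | add f g _ _ hf hg =>
    obtain ⟨e, he, he₁, he₂⟩ := hf
    obtain ⟨e', he', he₁', he₂'⟩ := hg
    exact ⟨e + e', Polynomial.natDegree_add_le_of_degree_le he he',
      fun s => by simp [he₁, he₁'], by simp [he₂, he₂']⟩
  | smul b f _ hf =>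
    obtain ⟨e, he, he₁, he₂⟩ := hf
    exact ⟨b • e, (Polynomial.natDegree_smul_le _ _).trans he,
      fun s => by simp [he₁], by simp [he₂]⟩

/-- Representatives of the points of the projective line over `F`, with `none` standing for the
point at infinity `(1, 0)` and `some s` for `(s, 1)`. -/
def dir : Option F → F × F
  | none => (1, 0)
  | some s => (s, 1)

@[simp] theorem dir_none : dir (none : Option F) = (1, 0) := rfl

@[simp] theorem dir_some (s : F) : dir (some s) = (s, 1) := rfl

theorem dir_ne_zero (d : Option F) : dir d ≠ 0 := by
  cases d <;> simp

theorem exists_eq_smul_dir {x : F × F} (hx : x ≠ 0) : ∃ a : F, a ≠ 0 ∧ ∃ d, x = a • dir d := by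
  obtain ⟨s, t⟩ := x
  by_cases ht : t = 0
  · subst ht
    exact ⟨s, by simpa using hx, none, by simp⟩
  · exact ⟨t, ht, some (s / t), by simp [mul_div_cancel₀ _ ht]⟩

theorem eq_zero_of_mem_binaryForm [Finite F] {k : ℕ} {f : F × F → F} (hf : f ∈ binaryForm F k)
    {S : Finset (Option F)} (hS : ∀ d ∈ S, f (dir d) = 0) (hk : k < #S) : f = 0 := by
  have := Fintype.ofFinite F
  replace hk : k < #{d | f (dir d) = 0} :=
    hk.trans_le (card_le_card fun d hd => mem_filter.2 ⟨mem_univ d, hS d hd⟩)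
  obtain ⟨e, hdeg, hs, hinf⟩ := exists_dehomogenization hf
  have hcard : #{d | f (dir d) = 0} = (if e.coeff k = 0 then 1 else 0) + #{s | e.eval s = 0} := by
    rw [card_filter, Fintype.sum_option, ← card_filter]
    simp only [dir_none, dir_some, hinf, hs]
  have he : e = 0 := by
    by_cases hlead : e.coeff k = 0
    · rw [hcard, if_pos hlead] at hk
      rcases Nat.eq_zero_or_pos k with rfl | hpos
      · rw [Polynomial.eq_C_of_natDegree_le_zero hdeg, hlead, map_zero]
      · have hlt : e.natDegree < k := by
          refine lt_of_le_of_ne hdeg fun hdeg => ?_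
          rw [← hdeg, Polynomial.coeff_natDegree, Polynomial.leadingCoeff_eq_zero] at hlead
          rw [hlead, Polynomial.natDegree_zero] at hdeg
          omega
        exact Polynomial.eq_zero_of_natDegree_lt_card_of_eval_eq_zero' _ {s | e.eval s = 0}
          (fun s hs => (mem_filter.1 hs).2) (by omega)
    · rw [hcard, if_neg hlead] at hk
      exact Polynomial.eq_zero_of_natDegree_lt_card_of_eval_eq_zero' _ {s | e.eval s = 0}
        (fun s hs => (mem_filter.1 hs).2) (by omega)
  have hdir : ∀ d, f (dir d) = 0
    | none => by rw [dir_none, hinf, he, Polynomial.coeff_zero]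
    | some s => by rw [dir_some, hs, he, Polynomial.eval_zero]
  have hsmul := apply_smul_of_mem_binaryForm hf
  ext x
  by_cases hx : x = 0
  · rw [hx, ← zero_smul F (dir (none : Option F)), hsmul, hdir, mul_zero, Pi.zero_apply]
  · obtain ⟨a, -, d, rfl⟩ := exists_eq_smul_dir hx
    rw [hsmul, hdir, mul_zero, Pi.zero_apply]

variable [Fintype F]

local notation "q" => Fintype.card F

theorem sum_prod_eq_add_mul_sum_dir (φ : F × F → ℕ) (hφ : ∀ a : F, a ≠ 0 → ∀ x, φ (a • x) = φ x) :
    ∑ x, φ x = φ 0 + (q - 1) * ∑ d, φ (dir d) := by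
  have hrow : ∀ t : F, t ≠ 0 → ∑ s, φ (s, t) = ∑ s, φ (s, 1) := fun t ht => by
    refine (Fintype.sum_equiv (Equiv.mulLeft₀ t ht) _ _ fun s => ?_).symm
    simpa using (hφ t ht (s, 1)).symm
  have hinf : ∀ s : F, s ≠ 0 → φ (s, 0) = φ (1, 0) := fun s hs => by simpa using hφ s hs (1, 0)
  have hcard : #(univ.erase (0 : F)) = q - 1 := by rw [card_erase_of_mem (mem_univ _), card_univ]
  rw [Fintype.sum_prod_type_right, ← add_sum_erase _ _ (mem_univ 0),
    sum_congr rfl fun t ht => hrow t (ne_of_mem_erase ht),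
    ← add_sum_erase _ (fun s => φ (s, 0)) (mem_univ 0),
    sum_congr rfl fun s hs => hinf s (ne_of_mem_erase hs)]
  simp only [sum_const, hcard, smul_eq_mul, Fintype.sum_option, dir_none, dir_some,
    Prod.mk_zero_zero]
  ring

end BinaryForm

section RootPolynomial

variable {F : Type*} [Field F]

/-- The monic polynomial whose roots are the elements of `A`, all of them simple. -/
noncomputable def rootPoly (A : Finset F) : Polynomial F :=
  ∏ a ∈ A, (Polynomial.X - Polynomial.C a)

/-- The coefficient of `T ^ (#A - l)` in `rootPoly A`, that is, up to sign, the `l`-th elementary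
symmetric function of `A`. Meaningful for `l ≤ #A` only. -/
noncomputable def rootCoeff (A : Finset F) (l : ℕ) : F := (rootPoly A).coeff (#A - l)

theorem natDegree_rootPoly (A : Finset F) : (rootPoly A).natDegree = #A := by
  rw [rootPoly, Polynomial.natDegree_finsetProd_X_sub_C_eq_card]

theorem eval_rootPoly_eq_zero_iff {A : Finset F} {T : F} : (rootPoly A).eval T = 0 ↔ T ∈ A := by
  simp [rootPoly, Polynomial.eval_prod, prod_eq_zero_iff, sub_eq_zero]

theorem eval_rootPoly (A : Finset F) (T : F) :
    (rootPoly A).eval T = ∑ i ∈ range (#A + 1), rootCoeff A i * T ^ (#A - i) := by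
  rw [Polynomial.eval_eq_sum_range, natDegree_rootPoly, ← sum_range_reflect]
  exact sum_congr rfl fun i _ => by simp [rootCoeff]

theorem rootCoeff_zero (A : Finset F) : rootCoeff A 0 = 1 := by
  have h := (Polynomial.monic_prod_of_monic A _ fun a _ => Polynomial.monic_X_sub_C a)
  rw [rootCoeff, Nat.sub_zero, ← natDegree_rootPoly]
  exact h.coeff_natDegree

theorem rootCoeff_eq_esymm {A : Finset F} {l : ℕ} (hl : l ≤ #A) :
    rootCoeff A l = (-1) ^ l * A.val.esymm l := by
  rw [rootCoeff, rootPoly, Finset.prod_eq_multiset_prod,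
    Multiset.prod_X_sub_C_coeff A.val (k := #A - l) (Nat.sub_le _ _), Finset.card_val,
    Nat.sub_sub_self hl]

theorem mul_esymm_eq_sum (A : Finset F) (l : ℕ) :
    (l : F) * A.val.esymm l = (-1) ^ (l + 1) *
      ∑ x ∈ antidiagonal l with x.1 < l, (-1) ^ x.1 * A.val.esymm x.1 * ∑ a ∈ A, a ^ x.2 := by
  have hmap : (univ : Finset A).val.map (fun x : A => (x : F)) = A.val := by
    rw [← Finset.attach_eq_univ, Finset.attach_val]
    exact Multiset.attach_map_val A.val
  have hpsum (i : ℕ) : MvPolynomial.aeval (fun x : A => (x : F)) (MvPolynomial.psum A F i)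
      = ∑ a ∈ A, a ^ i := by
    simp only [MvPolynomial.psum, map_sum, map_pow, MvPolynomial.aeval_X]
    exact Finset.sum_coe_sort A (fun a => a ^ i)
  have h := congrArg (MvPolynomial.aeval (fun x : A => (x : F)))
    (MvPolynomial.mul_esymm_eq_sum (σ := A) (R := F) l)
  simpa only [map_mul, map_natCast, map_pow, map_neg, map_one, map_sum, hpsum,
    MvPolynomial.aeval_esymm_eq_multiset_esymm, hmap] using h

theorem natCast_mul_rootCoeff {A : Finset F} {l : ℕ} (hl : l ≤ #A) :
    (l : F) * rootCoeff A l = -∑ i ∈ range l, rootCoeff A i * ∑ a ∈ A, a ^ (l - i) := by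
  rw [rootCoeff_eq_esymm hl, mul_left_comm, mul_esymm_eq_sum, sum_filter,
    Finset.Nat.sum_antidiagonal_eq_sum_range_succ_mk, sum_range_succ, if_neg (by simp), add_zero,
    ← mul_assoc, ← pow_add, Odd.neg_one_pow ⟨l, by ring⟩, neg_one_mul, neg_inj]
  refine sum_congr rfl fun i hi => ?_
  have hil := mem_range.1 hi
  rw [if_pos hil, rootCoeff_eq_esymm (hil.le.trans hl)]

theorem natCast_ne_zero_of_lt_char (F : Type*) [Field F] (p : ℕ) [CharP F p] {l : ℕ} (h₀ : l ≠ 0)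
    (hl : l < p) : (l : F) ≠ 0 := fun h =>
  hl.not_ge (Nat.le_of_dvd (Nat.pos_of_ne_zero h₀) ((CharP.cast_eq_zero_iff F p l).1 h))

theorem rootCoeff_eq_zero_of_sum_pow_eq_zero (p : ℕ) [CharP F p] {A : Finset F} {l : ℕ}
    (h₀ : l ≠ 0) (hp : l < p) (hA : l ≤ #A) (h : ∀ k, k ≠ 0 → k ≤ l → ∑ a ∈ A, a ^ k = 0) :
    rootCoeff A l = 0 := by
  have hnewton := natCast_mul_rootCoeff hA
  rw [sum_eq_zero, neg_zero] at hnewton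
  · exact (mul_eq_zero.1 hnewton).resolve_left (natCast_ne_zero_of_lt_char F p h₀ hp)
  · intro i hi
    have := mem_range.1 hi
    rw [h (l - i) (by omega) (Nat.sub_le _ _), mul_zero]

theorem natCast_mul_rootCoeff_of_rootCoeff_eq_zero {A : Finset F} {l : ℕ} (h₀ : l ≠ 0)
    (hA : l ≤ #A) (h : ∀ i, i ≠ 0 → i < l → rootCoeff A i = 0) :
    (l : F) * rootCoeff A l = -∑ a ∈ A, a ^ l := by
  rw [natCast_mul_rootCoeff hA, sum_eq_single_of_mem 0 (mem_range.2 (Nat.pos_of_ne_zero h₀)),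
    rootCoeff_zero, one_mul, Nat.sub_zero]
  intro i hi hi₀
  rw [h i hi₀ (mem_range.1 hi), zero_mul]

theorem eval_derivative_rootPoly {A : Finset F} {x : F} (hx : x ∉ A) :
    (rootPoly A).derivative.eval x = (rootPoly A).eval x * ∑ a ∈ A, (x - a)⁻¹ ∧
    (rootPoly A).derivative.derivative.eval x
      = (rootPoly A).eval x * ((∑ a ∈ A, (x - a)⁻¹) ^ 2 - ∑ a ∈ A, ((x - a)⁻¹) ^ 2) := by
  induction A using Finset.induction_on with
  | empty => simp [rootPoly]
  | insert b A hb ih =>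
    rw [mem_insert, not_or] at hx
    obtain ⟨ih₁, ih₂⟩ := ih hx.2
    have hmul : rootPoly (insert b A) = (Polynomial.X - Polynomial.C b) * rootPoly A := by
      rw [rootPoly, prod_insert hb, rootPoly]
    have hxb : x - b ≠ 0 := sub_ne_zero.2 hx.1
    rw [hmul, sum_insert hb, sum_insert hb]
    simp only [Polynomial.derivative_mul, Polynomial.derivative_add, Polynomial.derivative_sub,
      Polynomial.derivative_X, Polynomial.derivative_C, sub_zero,
      one_mul, Polynomial.eval_add, Polynomial.eval_mul, Polynomial.eval_sub,
      Polynomial.eval_X, Polynomial.eval_C, ih₁, ih₂]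
    constructor
    · field_simp
    · field_simp
      ring

theorem derivative_derivative_rootPoly_eq_zero [Fintype F] {A : Finset F}
    (hA : 2 * #A < Fintype.card F + 2)
    (h : ∀ x ∉ A, ∑ a ∈ A, (x - a)⁻¹ ^ 2 = (∑ a ∈ A, (x - a)⁻¹) ^ 2) :
    (rootPoly A).derivative.derivative = 0 := by
  refine Polynomial.eq_zero_of_natDegree_lt_card_of_eval_eq_zero' _ Aᶜ (fun x hx => ?_) ?_
  · have hx := mem_compl.1 hx
    rw [(eval_derivative_rootPoly hx).2, h x hx, sub_self, mul_zero]
  · have hdeg := Polynomial.natDegree_derivative_le (rootPoly A)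
    have hdeg' := Polynomial.natDegree_derivative_le (rootPoly A).derivative
    rw [natDegree_rootPoly] at hdeg
    rw [card_compl]
    have := card_le_univ A
    have := Fintype.one_lt_card (α := F)
    omega

theorem sum_pow_eq_zero_of_sum_inv_sq [Fintype F] {p : ℕ} [CharP F p] {A : Finset F}
    (hF : 2 * p < Fintype.card F)
    (hA : #A = p + 1) (h₁ : ∑ a ∈ A, a = 0)
    (h : ∀ x ∉ A, ∑ a ∈ A, (x - a)⁻¹ ^ 2 = (∑ a ∈ A, (x - a)⁻¹) ^ 2)
    {k : ℕ} (h₀ : k ≠ 0) (hk : k < p) : ∑ a ∈ A, a ^ k = 0 := by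
  have hderiv := derivative_derivative_rootPoly_eq_zero (by omega) h
  have hcoeff : ∀ l, l ≠ 0 → l < p → rootCoeff A l = 0 := by
    intro l hl₀ hl
    rcases eq_or_ne l 1 with rfl | hl₁
    · simpa [h₁, rootCoeff_zero] using natCast_mul_rootCoeff (A := A) (l := 1) (by omega)
    · have hzero := congrArg (fun f => Polynomial.coeff f (p - 1 - l)) hderiv
      simp only [Polynomial.coeff_derivative, Polynomial.coeff_zero, ← Nat.cast_succ] at hzero
      rw [rootCoeff, hA, show p + 1 - l = p - 1 - l + 1 + 1 by omega]
      refine (mul_eq_zero.1 ((mul_eq_zero.1 hzero).resolve_right ?_)).resolve_right ?_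
      all_goals exact natCast_ne_zero_of_lt_char F p (by omega) (by omega)
  have hnewton := natCast_mul_rootCoeff_of_rootCoeff_eq_zero h₀ (by omega : k ≤ #A)
    fun i hi hik => hcoeff i hi (hik.trans hk)
  rw [hcoeff k h₀ hk, mul_zero] at hnewton
  exact neg_eq_zero.1 hnewton.symm

end RootPolynomial

section BaerSubline

variable {F : Type*} [Field F] {p : ℕ} [Fact p.Prime] {A : Finset F}

theorem eval_rootPoly_of_sum_pow_eq_zero [CharP F p] (hA : #A = p + 1)
    (h : ∀ k, k ≠ 0 → k < p → ∑ a ∈ A, a ^ k = 0) (T : F) :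
    (rootPoly A).eval T = T ^ (p + 1) + rootCoeff A p * T - ∑ a ∈ A, a ^ (p + 1) := by
  have hp : 1 < p := (Fact.out : p.Prime).one_lt
  have hcoeff : ∀ l, l ≠ 0 → l < p → rootCoeff A l = 0 := fun l h₀ hl =>
    rootCoeff_eq_zero_of_sum_pow_eq_zero p h₀ hl (by omega) fun k hk hkl => h k hk (by omega)
  have hmiddle : ∀ φ : ℕ → F, ∑ i ∈ range p, rootCoeff A i * φ i = φ 0 := fun φ => by
    rw [sum_eq_single_of_mem 0 (mem_range.2 (by omega)), rootCoeff_zero, one_mul]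
    exact fun i hi hi₀ => by rw [hcoeff i hi₀ (mem_range.1 hi), zero_mul]
  have hlast : rootCoeff A (p + 1) = -∑ a ∈ A, a ^ (p + 1) := by
    have hnewton := natCast_mul_rootCoeff (l := p + 1) hA.ge
    rwa [sum_range_succ, Nat.add_sub_cancel_left, h 1 one_ne_zero hp, mul_zero, add_zero,
      hmiddle fun i => ∑ a ∈ A, a ^ (p + 1 - i), Nat.cast_add, CharP.cast_eq_zero, Nat.cast_one,
      zero_add, one_mul] at hnewton
  rw [eval_rootPoly, hA, sum_range_succ, sum_range_succ, hlast, hmiddle fun i => T ^ (p + 1 - i)]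
  simp [sub_eq_add_neg]

/- The power sum of exponent `2 * p + 1` is computed twice: as the Frobenius image of the power sum
of exponent `p + 2`, which vanishes, and directly from `a ^ (p + 1) = S - ε * a`. -/
theorem rootCoeff_mul_sum_pow_eq_zero [Fintype F] (hF : Fintype.card F = p ^ 2) (hp : 2 < p)
    (hA : #A = p + 1) (h : ∀ k, k ≠ 0 → k < p → ∑ a ∈ A, a ^ k = 0) :
    rootCoeff A p * ∑ a ∈ A, a ^ (p + 1) = 0 := by
  have : CharP F p := charP_of_card_eq_prime_pow hF
  set S := ∑ a ∈ A, a ^ (p + 1)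
  have hroot : ∀ a ∈ A, a ^ (p + 1) = S - rootCoeff A p * a := fun a ha => by
    have := eval_rootPoly_of_sum_pow_eq_zero hA h a
    rw [eval_rootPoly_eq_zero_iff.2 ha] at this
    linear_combination -this
  have h₁ : ∑ a ∈ A, a = 0 := by simpa using h 1 one_ne_zero (by omega)
  have hsum₁ : ∑ a ∈ A, a ^ (p + 2) = 0 := by
    have hterm : ∀ a ∈ A, a ^ (p + 2) = S * a - rootCoeff A p * a ^ 2 := fun a ha => by
      rw [pow_succ, hroot a ha]
      ring
    rw [sum_congr rfl hterm, sum_sub_distrib, ← mul_sum, ← mul_sum, h₁,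
      h 2 two_ne_zero hp, mul_zero, mul_zero, sub_zero]
  have hsum₂ : ∑ a ∈ A, a ^ (2 * p + 1) = 0 := by
    have hterm : ∀ a ∈ A, a ^ (2 * p + 1) = (a ^ (p + 2)) ^ p := fun a _ => by
      have hfrob : a ^ p ^ 2 = a := hF ▸ FiniteField.pow_card a
      rw [← pow_mul, show (p + 2) * p = p ^ 2 + 2 * p by ring, pow_add a (p ^ 2), hfrob, pow_succ']
    rw [sum_congr rfl hterm, ← sum_pow_char, hsum₁, zero_pow (by omega)]
  have hterm : ∀ a ∈ A, a ^ (2 * p + 1) = S * a ^ p - rootCoeff A p * a ^ (p + 1) := fun a ha => by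
    linear_combination a ^ p * hroot a ha
  rw [sum_congr rfl hterm, sum_sub_distrib, ← mul_sum, ← mul_sum, ← sum_pow_char, h₁,
    zero_pow (by omega), mul_zero, zero_sub, neg_eq_zero] at hsum₂
  exact hsum₂

theorem sum_pow_succ_char_ne_zero [CharP F p] (hA : #A = p + 1)
    (h : ∀ k, k ≠ 0 → k < p → ∑ a ∈ A, a ^ k = 0) : ∑ a ∈ A, a ^ (p + 1) ≠ 0 := by
  intro hS
  have hroot : ∀ a ∈ A.erase 0, a ^ p = -rootCoeff A p := fun a ha => by
    obtain ⟨ha₀, ha⟩ := mem_erase.1 ha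
    have := eval_rootPoly_of_sum_pow_eq_zero hA h a
    rw [eval_rootPoly_eq_zero_iff.2 ha, hS] at this
    refine mul_right_cancel₀ ha₀ ?_
    linear_combination -this
  have hone : #(A.erase 0) ≤ 1 := card_le_one.2 fun a ha b hb =>
    frobenius_inj F p (by simp only [frobenius_def, hroot a ha, hroot b hb])
  have hp : 1 < p := (Fact.out : p.Prime).one_lt
  have := pred_card_le_card_erase (s := A) (a := 0)
  omega

theorem mem_iff_pow_eq_of_sum_pow_eq_zero [Fintype F] (hF : Fintype.card F = p ^ 2) (hp : 2 < p)
    (hA : #A = p + 1) (h : ∀ k, k ≠ 0 → k < p → ∑ a ∈ A, a ^ k = 0) (T : F) :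
    T ∈ A ↔ T ^ (p + 1) = ∑ a ∈ A, a ^ (p + 1) := by
  have : CharP F p := charP_of_card_eq_prime_pow hF
  have hcoeff : rootCoeff A p = 0 := (mul_eq_zero.1 (rootCoeff_mul_sum_pow_eq_zero hF hp hA h)
    ).resolve_right (sum_pow_succ_char_ne_zero hA h)
  rw [← eval_rootPoly_eq_zero_iff, eval_rootPoly_of_sum_pow_eq_zero hA h, hcoeff, zero_mul,
    add_zero, sub_eq_zero]

end BaerSubline

section LinearIndependent

variable {F E : Type*} [Field F] [AddCommGroup E] [Module F E] {u w P : E}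

theorem linearIndependent_triple_iff : LinearIndependent F ![u, w, P] ↔
    ∀ a b c : F, a • u + b • w + c • P = 0 → a = 0 ∧ b = 0 ∧ c = 0 := by
  rw [Fintype.linearIndependent_iff]
  constructor
  · intro h a b c habc
    have h' := h ![a, b, c] (by simpa [Fin.sum_univ_three] using habc)
    exact ⟨h' 0, h' 1, h' 2⟩
  · intro h g hg i
    obtain ⟨h₀, h₁, h₂⟩ := h (g 0) (g 1) (g 2) (by simpa [Fin.sum_univ_three] using hg)
    fin_cases i <;> assumption

theorem linearIndependent_triple_rotate (h : LinearIndependent F ![u, w, P]) :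
    LinearIndependent F ![w, P, u] := by
  rw [linearIndependent_triple_iff] at h ⊢
  intro a b c habc
  obtain ⟨h₁, h₂, h₃⟩ := h c a b (by rw [← habc]; module)
  exact ⟨h₂, h₃, h₁⟩

theorem linearIndependent_triple_reverse (h : LinearIndependent F ![u, w, P]) :
    LinearIndependent F ![P, w, u] := by
  rw [linearIndependent_triple_iff] at h ⊢
  intro a b c habc
  obtain ⟨h₁, h₂, h₃⟩ := h c b a (by rw [← habc]; module)
  exact ⟨h₃, h₂, h₁⟩

theorem linearIndependent_triple_add_smul (h : LinearIndependent F ![u, w, P]) (s t : F) :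
    LinearIndependent F ![u + s • P, w + t • P, P] := by
  rw [linearIndependent_triple_iff] at h ⊢
  intro a b c habc
  obtain ⟨rfl, rfl, hc⟩ := h a b (a * s + b * t + c) (by rw [← habc]; module)
  simpa using hc

theorem finrank_span_pair_of_linearIndependent (h : LinearIndependent F ![u, w]) :
    finrank F (Submodule.span F {u, w}) = 2 := by
  have hrank := finrank_span_eq_card h
  rwa [Matrix.range_cons, Matrix.range_cons, Matrix.range_empty, Set.union_empty,
    Set.singleton_union, Fintype.card_fin] at hrank

theorem exists_linearIndependent_triple_of_pair (hE : finrank F E = 3)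
    (h : LinearIndependent F ![u, w]) : ∃ P, LinearIndependent F ![P, u, w] :=
  exists_linearIndependent_cons_of_lt_finrank h (by omega)

theorem exists_linearIndependent_triple_of_ne_zero (hE : finrank F E = 3) (hP : P ≠ 0) :
    ∃ u w, LinearIndependent F ![u, w, P] := by
  have hP' : LinearIndependent F ![P] := LinearIndependent.of_subsingleton 0 hP
  obtain ⟨w, hw⟩ := exists_linearIndependent_cons_of_lt_finrank hP' (by omega)
  obtain ⟨u, hu⟩ := exists_linearIndependent_triple_of_pair hE hw
  exact ⟨u, w, hu⟩

theorem bijective_combination (hE : finrank F E = 3) (h : LinearIndependent F ![u, w, P]) :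
    Function.Bijective fun x : (F × F) × F => x.1.1 • u + x.1.2 • w + x.2 • P := by
  constructor
  · rintro ⟨⟨a, b⟩, c⟩ ⟨⟨a', b'⟩, c'⟩ heq
    simp only at heq
    obtain ⟨ha, hb, hc⟩ := linearIndependent_triple_iff.1 h (a - a') (b - b') (c - c')
      (by rw [← sub_eq_zero.2 heq]; module)
    rw [sub_eq_zero.1 ha, sub_eq_zero.1 hb, sub_eq_zero.1 hc]
  · intro y
    have hy : y ∈ Submodule.span F (Set.range ![u, w, P]) := by
      rw [h.span_eq_top_of_card_eq_finrank (by simp [hE])]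
      trivial
    obtain ⟨g, rfl⟩ := (Submodule.mem_span_range_iff_exists_fun F).1 hy
    exact ⟨((g 0, g 1), g 2), by simp [Fin.sum_univ_three]⟩

theorem exists_eq_combination (hE : finrank F E = 3) (h : LinearIndependent F ![u, w, P]) (y : E) :
    ∃ a b c : F, y = a • u + b • w + c • P := by
  obtain ⟨⟨⟨a, b⟩, c⟩, rfl⟩ := (bijective_combination hE h).2 y
  exact ⟨a, b, c, rfl⟩

/-- The parametrization `(s, t) ↦ s u + t w` of the span of `u` and `w`. -/
def comb (u w : E) : F × F →ₗ[F] E :=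
  (LinearMap.toSpanSingleton F E u).coprod (LinearMap.toSpanSingleton F E w)

theorem comb_apply (u w : E) (x : F × F) : comb u w x = x.1 • u + x.2 • w := rfl

end LinearIndependent

/-- A cone in `E` whose set of points has its characteristic vector in the code spanned by
hyperplanes: `∑ i, weight i * form i y ^ (q - 1)`, a combination of indicators of complements of
hyperplanes, is the indicator of the complement of the cone. -/
structure CodeCone (F E : Type*) [Field F] [Fintype F] [AddCommGroup E] [Module F E] where
  n : ℕ
  weight : Fin n → F
  form : Fin n → Dual F E
  zero_or_one : ∀ y, ∑ i, weight i * form i y ^ (Fintype.card F - 1) = 0 ∨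
    ∑ i, weight i * form i y ^ (Fintype.card F - 1) = 1

namespace CodeCone

variable {F E : Type*} [Field F] [Fintype F] [AddCommGroup E] [Module F E] (D : CodeCone F E)
  {P v X u w : E}

local notation "q" => Fintype.card F

/-- The indicator of the complement of the cone; the cone itself is the locus `D.ind y = 0`. -/
def ind (y : E) : F := ∑ i, D.weight i * D.form i y ^ (q - 1)

/-- The parameters of the points of the cone on the affine line `v + T • P`. -/
noncomputable def lineZeros (P v : E) : Finset F := {T | D.ind (v + T • P) = 0}

/-- The coefficient of `T ^ (q - 1 - k)` in the polynomial `D.ind (v + T • P)`. -/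
def lineCoeff (k : ℕ) (P v : E) : F :=
  ∑ i, D.weight i * (-D.form i v) ^ k * D.form i P ^ (q - 1 - k)

theorem ind_eq_zero_or_eq_one (y : E) : D.ind y = 0 ∨ D.ind y = 1 := D.zero_or_one y

theorem ind_ne_zero_iff {y : E} : D.ind y ≠ 0 ↔ D.ind y = 1 :=
  ⟨(D.ind_eq_zero_or_eq_one y).resolve_left, fun h => by rw [h]; exact one_ne_zero⟩

theorem mem_lineZeros {T : F} : T ∈ D.lineZeros P v ↔ D.ind (v + T • P) = 0 := by
  rw [lineZeros, mem_filter_univ]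

theorem ind_smul {a : F} (ha : a ≠ 0) (y : E) : D.ind (a • y) = D.ind y := by
  simp only [ind, map_smul, smul_eq_mul, mul_pow, FiniteField.pow_card_sub_one_eq_one a ha, one_mul]

theorem ind_zero : D.ind 0 = 0 := by
  have hq : q - 1 ≠ 0 := Nat.sub_ne_zero_of_lt Fintype.one_lt_card
  simp only [ind, map_zero, zero_pow hq, mul_zero, sum_const_zero]

theorem ne_zero_of_ind_eq_one (hP : D.ind P = 1) : P ≠ 0 := by
  rintro rfl
  exact zero_ne_one (D.ind_zero.symm.trans hP)

theorem ind_add_smul (P v : E) (T : F) :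
    D.ind (v + T • P) = ∑ k ∈ range q, D.lineCoeff k P v * T ^ (q - 1 - k) := by
  simp only [ind, lineCoeff, sum_mul]
  rw [sum_comm]
  refine sum_congr rfl fun i _ => ?_
  rw [map_add, map_smul, smul_eq_mul, add_comm, ← sub_neg_eq_add, sub_pow_card_sub_one, mul_sum]
  exact sum_congr rfl fun k _ => by rw [mul_pow]; ring

theorem ind_add_smul_eq_ite (P v : E) (T : F) :
    D.ind (v + T • P) = if T ∈ D.lineZeros P v then 0 else 1 := by
  split_ifs with h
  · exact D.mem_lineZeros.1 h
  · exact D.ind_ne_zero_iff.1 (mt D.mem_lineZeros.2 h)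

theorem lineCoeff_eq_sum_pow_add_ite (P v : E) {k : ℕ} (hk : k < q) : D.lineCoeff k P v =
    ∑ a ∈ D.lineZeros P v, a ^ k + if k = q - 1 then 1 - (#(D.lineZeros P v) : F) else 0 := by
  refine eq_sum_pow_of_sum_mul_pow_eq_ite (c := fun k => D.lineCoeff k P v) (fun T => ?_) hk
  rw [← ind_add_smul, ind_add_smul_eq_ite]

theorem natCast_card_lineZeros (P v : E) : (#(D.lineZeros P v) : F) = D.ind P := by
  have hq : 1 < q := Fintype.one_lt_card
  have h := D.lineCoeff_eq_sum_pow_add_ite P v (k := 0) (by omega)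
  rw [if_neg (by omega), add_zero] at h
  simpa [lineCoeff, ind] using h.symm

theorem lineCoeff_eq_sum_pow (hP : D.ind P = 1) (v : E) {k : ℕ} (hk : k < q) :
    D.lineCoeff k P v = ∑ a ∈ D.lineZeros P v, a ^ k := by
  rw [lineCoeff_eq_sum_pow_add_ite D P v hk, natCast_card_lineZeros, hP, sub_self, ite_self,
    add_zero]

theorem lineCoeff_pow_char (p : ℕ) [Fact p.Prime] [CharP F p] (hP : D.ind P = 1) (v : E) {k l : ℕ}
    (hk : k < q) (hl : l < q) (h : ∀ x : F, x ^ (k * p) = x ^ l) :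
    D.lineCoeff k P v ^ p = D.lineCoeff l P v := by
  rw [D.lineCoeff_eq_sum_pow hP v hk, D.lineCoeff_eq_sum_pow hP v hl, sum_pow_char]
  exact sum_congr rfl fun x _ => by rw [← pow_mul, h]

theorem lineCoeff_comb_mem_binaryForm (k : ℕ) (P u w : E) :
    (fun x => D.lineCoeff k P (comb u w x)) ∈ binaryForm F k := by
  have hterm : ∀ i ∈ univ, (D.weight i * D.form i P ^ (q - 1 - k)) •
      (fun x : F × F => -D.form i u * x.1 + -D.form i w * x.2) ^ k ∈ binaryForm F k := fun i _ => by
    have h := pow_mem_binaryForm (linear_mem_binaryForm (-D.form i u) (-D.form i w)) k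
    rw [mul_one] at h
    exact Submodule.smul_mem _ _ h
  convert Submodule.sum_mem _ hterm using 1
  ext x
  simp only [lineCoeff, comb_apply, map_add, map_smul, smul_eq_mul, Finset.sum_apply, Pi.smul_apply,
    Pi.pow_apply]
  refine sum_congr rfl fun i _ => ?_
  ring

theorem lineCoeff_one_add (P u w : E) :
    D.lineCoeff 1 P (u + w) = D.lineCoeff 1 P u + D.lineCoeff 1 P w := by
  simp only [lineCoeff, map_add, pow_one, neg_add, mul_add, add_mul, sum_add_distrib]

theorem lineCoeff_smul (k : ℕ) (P v : E) (a : F) :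
    D.lineCoeff k P (a • v) = a ^ k * D.lineCoeff k P v := by
  simp only [lineCoeff, map_smul, smul_eq_mul, mul_sum]
  exact sum_congr rfl fun _ _ => by ring

theorem lineCoeff_one_self (P : E) : D.lineCoeff 1 P P = -D.ind P := by
  have hq : q - 1 = (q - 1 - 1) + 1 := by
    have : 1 < q := Fintype.one_lt_card
    omega
  simp only [lineCoeff, ind, ← sum_neg_distrib]
  refine sum_congr rfl fun i _ => ?_
  conv_rhs => rw [hq, pow_succ]
  ring

theorem lineCoeff_one_shift (hP : D.ind P = 1) (v : E) :
    D.lineCoeff 1 P (v + D.lineCoeff 1 P v • P) = 0 := by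
  rw [lineCoeff_one_add, lineCoeff_smul, lineCoeff_one_self, hP]
  ring

theorem lineZeros_zero_of_ind_eq_one (hP : D.ind P = 1) : D.lineZeros P 0 = {0} := by
  ext T
  rw [mem_lineZeros, zero_add, mem_singleton]
  refine ⟨fun h => ?_, fun h => by rw [h, zero_smul, ind_zero]⟩
  by_contra hT
  exact one_ne_zero (hP.symm.trans ((D.ind_smul hT P).symm.trans h))

theorem lineZeros_zero_of_ind_eq_zero (hP : D.ind P = 0) : D.lineZeros P 0 = univ := by
  ext T
  simp only [mem_lineZeros, zero_add, mem_univ, iff_true]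
  rcases eq_or_ne T 0 with rfl | hT
  · rw [zero_smul, ind_zero]
  · rw [D.ind_smul hT, hP]

theorem lineZeros_add_smul (P v : E) (a : F) :
    D.lineZeros P (v + a • P) = (D.lineZeros P v).image (· - a) := by
  ext T
  rw [mem_lineZeros, mem_image, add_assoc, ← add_smul, add_comm a, ← mem_lineZeros]
  exact ⟨fun h => ⟨_, h, add_sub_cancel_right T a⟩, by rintro ⟨b, hb, rfl⟩; rwa [sub_add_cancel]⟩

theorem lineZeros_smul (P v : E) {a : F} (ha : a ≠ 0) :
    D.lineZeros P (a • v) = (D.lineZeros P v).image (a * ·) := by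
  ext T
  rw [mem_lineZeros, mem_image]
  constructor
  · intro h
    refine ⟨a⁻¹ * T, ?_, mul_inv_cancel_left₀ ha T⟩
    rwa [mem_lineZeros, ← D.ind_smul ha, smul_add, smul_smul, mul_inv_cancel_left₀ ha]
  · rintro ⟨b, hb, rfl⟩
    rw [mul_smul, ← smul_add, D.ind_smul ha]
    exact D.mem_lineZeros.1 hb

theorem card_lineZeros_add_smul (P v : E) (a : F) :
    #(D.lineZeros P (v + a • P)) = #(D.lineZeros P v) := by
  rw [lineZeros_add_smul, card_image_of_injective _ (sub_left_injective)]

theorem card_lineZeros_smul (P v : E) {a : F} (ha : a ≠ 0) :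
    #(D.lineZeros P (a • v)) = #(D.lineZeros P v) := by
  rw [D.lineZeros_smul P v ha, card_image_of_injective _ (mul_right_injective₀ ha)]

/- The line through `X` and `P` is parametrized by `X + T • P` and by `P + T⁻¹ • X`. -/
theorem lineZeros_swap (hP : D.ind P = 1) (X : E) :
    D.lineZeros X P = ((D.lineZeros P X).erase 0).image (·⁻¹) := by
  have hinv : ∀ {Y Z : E} {T : F}, T ≠ 0 → T ∈ D.lineZeros Y Z → T⁻¹ ∈ D.lineZeros Z Y := by
    intro Y Z T hT h
    rw [mem_lineZeros] at h ⊢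
    rw [← D.ind_smul hT, smul_add, smul_smul, mul_inv_cancel₀ hT, one_smul, add_comm, h]
  ext T
  rw [mem_image]
  constructor
  · intro hT
    have hT₀ : T ≠ 0 := by
      rintro rfl
      rw [mem_lineZeros, zero_smul, add_zero, hP] at hT
      exact one_ne_zero hT
    exact ⟨T⁻¹, mem_erase.2 ⟨inv_ne_zero hT₀, hinv hT₀ hT⟩, inv_inv T⟩
  · rintro ⟨S, hS, rfl⟩
    exact hinv (mem_erase.1 hS).1 (mem_erase.1 hS).2

theorem lineCoeff_two_shift (hq : 2 < q) (hP : D.ind P = 1) (v : E) :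
    D.lineCoeff 2 P (v + D.lineCoeff 1 P v • P) = D.lineCoeff 2 P v - D.lineCoeff 1 P v ^ 2 := by
  set τ := D.lineCoeff 1 P v with hτ
  have hexpand : ∀ a ∈ D.lineZeros P v, (a - τ) ^ 2 = a ^ 2 - 2 * τ * a ^ 1 + τ ^ 2 :=
    fun a _ => by ring
  rw [D.lineCoeff_eq_sum_pow hP _ hq, lineZeros_add_smul,
    sum_image fun a _ b _ h => sub_left_injective h, sum_congr rfl hexpand, sum_add_distrib,
    sum_sub_distrib, ← mul_sum, ← D.lineCoeff_eq_sum_pow hP v hq,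
    ← D.lineCoeff_eq_sum_pow hP v (one_lt_two.trans hq), ← hτ, sum_const, nsmul_eq_mul,
    natCast_card_lineZeros, hP]
  ring

/-- The span of `u` and `w` is the polar line of a point `P` off the cone: it meets every line
through `P` in the point from which the power sum `D.lineCoeff 1` of the cone vanishes. -/
structure IsPolarTriple (P u w : E) : Prop where
  ind_eq_one : D.ind P = 1
  linearIndependent : LinearIndependent F ![u, w, P]
  lineCoeff_left : D.lineCoeff 1 P u = 0
  lineCoeff_right : D.lineCoeff 1 P w = 0

theorem IsPolarTriple.lineCoeff_one_comb {D : CodeCone F E} (h : D.IsPolarTriple P u w)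
    (x : F × F) : D.lineCoeff 1 P (comb u w x) = 0 := by
  rw [comb_apply, lineCoeff_one_add, lineCoeff_smul, lineCoeff_smul, h.lineCoeff_left,
    h.lineCoeff_right]
  ring

theorem isPolarTriple_shift (h : LinearIndependent F ![u, w, P]) (hP : D.ind P = 1) :
    D.IsPolarTriple P (u + D.lineCoeff 1 P u • P) (w + D.lineCoeff 1 P w • P) :=
  ⟨hP, linearIndependent_triple_add_smul h _ _, D.lineCoeff_one_shift hP u,
    D.lineCoeff_one_shift hP w⟩

theorem exists_isPolarTriple (hE : finrank F E = 3) (hP : D.ind P = 1) :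
    ∃ u w, D.IsPolarTriple P u w := by
  obtain ⟨u, w, h⟩ :=
    exists_linearIndependent_triple_of_ne_zero hE (D.ne_zero_of_ind_eq_one hP)
  exact ⟨_, _, D.isPolarTriple_shift h hP⟩

theorem ncard_cone_eq_sum (hE : finrank F E = 3) (h : LinearIndependent F ![u, w, P]) :
    {y | D.ind y = 0}.ncard = ∑ x : F × F, #(D.lineZeros P (comb u w x)) := by
  have hbij := bijective_combination hE h
  have himage : {y | D.ind y = 0} = (fun x : (F × F) × F => x.1.1 • u + x.1.2 • w + x.2 • P) ''
      ({x | D.ind (comb u w x.1 + x.2 • P) = 0} : Finset ((F × F) × F)) := by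
    rw [coe_filter_univ, ← Set.image_preimage_eq {y | D.ind y = 0} hbij.2]
    rfl
  rw [himage, Set.ncard_image_of_injective _ hbij.1, Set.ncard_coe_finset, card_filter,
    Fintype.sum_prod_type]
  simp only [lineZeros, card_filter]

theorem ncard_cone (hE : finrank F E = 3) (h : LinearIndependent F ![u, w, P]) :
    {y | D.ind y = 0}.ncard =
      #(D.lineZeros P 0) + (q - 1) * ∑ d : Option F, #(D.lineZeros P (comb u w (dir d))) := by
  rw [D.ncard_cone_eq_sum hE h, sum_prod_eq_add_mul_sum_dir _ fun a ha x => by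
    rw [map_smul, D.card_lineZeros_smul P _ ha], map_zero]

variable {R : E}

/-- The cone is the zero set of a nonsingular Hermitian form with respect to `x ↦ x ^ p`. -/
def IsHermitianCurve (p : ℕ) : Prop :=
  ∃ e : (Fin 3 → F) ≃ₗ[F] E, ∃ A : Matrix (Fin 3) (Fin 3) F, IsUnit A.det ∧
    Aᵀ = A.map (fun a => a ^ p) ∧ ∀ y, D.ind (e y) = 0 ↔ ∑ i, ∑ j, y i * A i j * y j ^ p = 0

/-- The points of the cone are those of a projective line. -/
def IsLine : Prop :=
  ∃ l : Submodule F E, finrank F l = 2 ∧ ∀ y, D.ind y = 0 ↔ y ∈ l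

/-- The points of the cone are those of `m` projective lines through a common point `⟨R⟩`. -/
def IsPencil (m : ℕ) : Prop :=
  ∃ L : Finset (Submodule F E), #L = m ∧ (∀ l ∈ L, finrank F l = 2) ∧
    (∃ R : E, R ≠ 0 ∧ ∀ l ∈ L, R ∈ l) ∧ ∀ y, D.ind y = 0 ↔ ∃ l ∈ L, y ∈ l

theorem lineZeros_nonempty (hP : D.ind P = 1) (v : E) : (D.lineZeros P v).Nonempty := by
  rw [nonempty_iff_ne_empty]
  intro h
  have hcard := D.natCast_card_lineZeros P v
  rw [h, card_empty, Nat.cast_zero, hP] at hcard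
  exact zero_ne_one hcard

theorem ind_eq_zero_iff_exists_mem_span (hE : finrank F E = 3) (h : LinearIndependent F ![v, P, R])
    (hP : D.ind P = 1) (hR : ∀ y, D.ind y = 0 → ∀ c : F, D.ind (y + c • R) = 0) (y : E) :
    D.ind y = 0 ↔ ∃ a ∈ D.lineZeros P v, y ∈ Submodule.span F {v + a • P, R} := by
  simp only [Submodule.mem_span_pair]
  constructor
  · intro hy
    obtain ⟨a, b, c, rfl⟩ := exists_eq_combination hE h y
    have hab : D.ind (a • v + b • P) = 0 := by
      have hshift := hR _ hy (-c)
      rwa [neg_smul, add_neg_cancel_right] at hshift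
    rcases eq_or_ne a 0 with rfl | ha
    · obtain ⟨a, ha⟩ := D.lineZeros_nonempty hP v
      have hb : b = 0 := by
        by_contra hb
        rw [zero_smul, zero_add, D.ind_smul hb, hP] at hab
        exact one_ne_zero hab
      exact ⟨a, ha, 0, c, by rw [hb]; module⟩
    · refine ⟨b / a, ?_, a, c, by rw [smul_add, smul_smul, mul_div_cancel₀ _ ha]⟩
      rwa [mem_lineZeros, ← D.ind_smul ha, smul_add, smul_smul, mul_div_cancel₀ _ ha]
  · rintro ⟨a, ha, s, t, rfl⟩
    refine hR _ ?_ t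
    rcases eq_or_ne s 0 with rfl | hs
    · rw [zero_smul, ind_zero]
    · rw [D.ind_smul hs, D.mem_lineZeros.1 ha]

theorem isPencil_of_vertex (hE : finrank F E = 3) (h : LinearIndependent F ![v, P, R])
    (hP : D.ind P = 1) (hR : ∀ y, D.ind y = 0 → ∀ c : F, D.ind (y + c • R) = 0) :
    D.IsPencil #(D.lineZeros P v) := by
  have hind := linearIndependent_triple_iff.1 h
  have hinj : Function.Injective fun a : F => Submodule.span F {v + a • P, R} := by
    intro a b hab
    have hmem : v + b • P ∈ Submodule.span F {v + a • P, R} := by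
      simp only at hab
      rw [hab]
      exact Submodule.subset_span (Set.mem_insert _ _)
    obtain ⟨s, t, hst⟩ := Submodule.mem_span_pair.1 hmem
    obtain ⟨hs, hab', -⟩ := hind (s - 1) (s * a - b) t (by rw [← sub_eq_zero.2 hst]; module)
    rwa [sub_eq_zero.1 hs, one_mul, sub_eq_zero] at hab'
  refine ⟨(D.lineZeros P v).image fun a => Submodule.span F {v + a • P, R},
    card_image_of_injective _ hinj, forall_mem_image.2 fun a _ => ?_,
    ⟨R, h.ne_zero 2, forall_mem_image.2 fun a _ => Submodule.subset_span (by simp)⟩, fun y => ?_⟩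
  · refine finrank_span_pair_of_linearIndependent (LinearIndependent.pair_iff.2 fun s t hst => ?_)
    obtain ⟨hs, -, ht⟩ := hind s (s * a) t (by rw [← hst]; module)
    exact ⟨hs, ht⟩
  · rw [D.ind_eq_zero_iff_exists_mem_span hE h hP hR, exists_mem_image]

end CodeCone

/-- The cone of a plane section with at most `p ^ 3 + p ^ 2 + p + 1` points, in a plane of order
`p ^ 2`; the cone of a set of `m` points has `m * (p ^ 2 - 1) + 1` vectors. -/
structure SmallPlaneSection (F E : Type*) [Field F] [Fintype F] [AddCommGroup E] [Module F E]
    (p : ℕ) extends CodeCone F E where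
  four_lt : 4 < p
  card_field : Fintype.card F = p ^ 2
  finrank_eq : finrank F E = 3
  ncard_le : {y | toCodeCone.ind y = 0}.ncard ≤ (p ^ 3 + p ^ 2 + p + 1) * (p ^ 2 - 1) + 1

namespace SmallPlaneSection

variable {F E : Type*} [Field F] [Fintype F] [AddCommGroup E] [Module F E] {p : ℕ}
  {P v u w : E}

local notation "q" => Fintype.card F

theorem five_mul_le_card (D : SmallPlaneSection F E p) : 5 * p ≤ q := by
  rw [D.card_field, sq]
  exact Nat.mul_le_mul_right p D.four_lt

theorem two_lt_card (D : SmallPlaneSection F E p) : 2 < q := by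
  have := D.five_mul_le_card
  have := D.four_lt
  omega

theorem pow_sq_eq_self (D : SmallPlaneSection F E p) (x : F) : x ^ p ^ 2 = x := by
  rw [← D.card_field, FiniteField.pow_card]

theorem exists_ind_eq_one (D : SmallPlaneSection F E p) : ∃ P, D.ind P = 1 := by
  by_contra! h
  have hall : {y | D.ind y = 0} = Set.univ :=
    Set.eq_univ_of_forall fun y => by_contra fun hy => h y (D.ind_ne_zero_iff.1 hy)
  have hcard : Nat.card E = (p ^ 2) ^ 3 := by
    have : Module.Finite F E := Module.finite_of_finrank_pos (by rw [D.finrank_eq]; omega)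
    rw [Module.natCard_eq_pow_finrank (K := F), D.finrank_eq, Nat.card_eq_fintype_card,
      D.card_field]
  have hle := D.ncard_le
  rw [hall, Set.ncard_univ, hcard] at hle
  have hp := D.four_lt
  have hpp : 5 * p ≤ p ^ 2 := by nlinarith
  have hlt : p ^ 3 + p ^ 2 + p + 1 < (p ^ 2) ^ 2 := by nlinarith
  have : p ^ 2 - 1 < p ^ 2 := by omega
  nlinarith

theorem charP [Fact p.Prime] (D : SmallPlaneSection F E p) : CharP F p :=
  charP_of_card_eq_prime_pow D.card_field

variable (D : SmallPlaneSection F E p)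

/-- The number `κ` such that the affine line `v + T • P`, where `D.ind P = 1`, has `1 + p κ` points
on the cone. -/
noncomputable def kappa (P v : E) : ℕ := (#(D.lineZeros P v) - 1) / p

/-- The directions of the pencil of lines through `P` meeting the cone once. -/
noncomputable def tangentDirs (P u w : E) : Finset (Option F) :=
  {d | D.kappa P (comb u w (dir d)) = 0}

/-- The directions of the pencil of lines through `P` meeting the cone more than `p + 1` times. -/
noncomputable def badDirs (P u w : E) : Finset (Option F) :=
  {d | 2 ≤ D.kappa P (comb u w (dir d))}

/-- The directions of the pencil of lines through `P` meeting the cone once or `p + 1` times. -/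
noncomputable def goodDirs (P u w : E) : Finset (Option F) :=
  {d | D.kappa P (comb u w (dir d)) ≤ 1}

theorem kappa_add_smul (P v : E) (a : F) : D.kappa P (v + a • P) = D.kappa P v := by
  rw [kappa, D.card_lineZeros_add_smul, kappa]

theorem sum_kappa_add_card_tangentDirs (P u w : E) :
    ∑ d : Option F, D.kappa P (comb u w (dir d)) + #(D.tangentDirs P u w) =
      ∑ d : Option F, (D.kappa P (comb u w (dir d)) - 1) + (q + 1) := by
  rw [tangentDirs, card_filter, ← sum_add_distrib, ← Fintype.card_option, ← card_univ,
    card_eq_sum_ones, ← sum_add_distrib]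
  refine sum_congr rfl fun d _ => ?_
  split_ifs <;> omega

theorem card_goodDirs_add_card_badDirs (P u w : E) :
    #(D.goodDirs P u w) + #(D.badDirs P u w) = q + 1 := by
  have hnot : D.badDirs P u w = ({d | ¬ D.kappa P (comb u w (dir d)) ≤ 1} : Finset _) :=
    filter_congr fun d _ => by omega
  rw [hnot, goodDirs, card_filter_add_card_filter_not, card_univ, Fintype.card_option]

theorem card_tangentDirs_le_card_goodDirs (P u w : E) :
    #(D.tangentDirs P u w) ≤ #(D.goodDirs P u w) :=
  card_le_card fun d hd => mem_filter.2 ⟨mem_univ d, by rw [(mem_filter.1 hd).2]; exact zero_le_one⟩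

variable [Fact p.Prime]

theorem card_lineZeros (hP : D.ind P = 1) (v : E) :
    #(D.lineZeros P v) = 1 + p * D.kappa P v := by
  have := D.charP
  have hmod : #(D.lineZeros P v) ≡ 1 [MOD p] := by
    rw [← CharP.natCast_eq_natCast F p, D.natCast_card_lineZeros, hP, Nat.cast_one]
  have hpos := card_pos.2 (D.lineZeros_nonempty hP v)
  have hdvd := (Nat.modEq_iff_dvd' hpos).1 hmod.symm
  rw [kappa, Nat.mul_div_cancel' hdvd]
  omega

theorem dvd_card_lineZeros (hP : D.ind P = 0) (v : E) : p ∣ #(D.lineZeros P v) := by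
  have := D.charP
  rw [← CharP.cast_eq_zero_iff F p, D.natCast_card_lineZeros, hP]

theorem lineZeros_of_kappa_eq_zero (hP : D.ind P = 1) (hv : D.lineCoeff 1 P v = 0)
    (hκ : D.kappa P v = 0) : D.lineZeros P v = {0} := by
  have hcard := D.card_lineZeros hP v
  rw [hκ, mul_zero, add_zero, card_eq_one] at hcard
  obtain ⟨a, ha⟩ := hcard
  have hsum := D.lineCoeff_eq_sum_pow hP v (one_lt_two.trans D.two_lt_card)
  rw [hv, ha, sum_singleton, pow_one] at hsum
  rw [ha, hsum]

theorem lineCoeff_eq_zero_of_kappa_eq_zero (hP : D.ind P = 1) (hv : D.lineCoeff 1 P v = 0)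
    (hκ : D.kappa P v = 0) {k : ℕ} (hk₀ : k ≠ 0) (hk : k < q) : D.lineCoeff k P v = 0 := by
  rw [D.lineCoeff_eq_sum_pow hP v hk, D.lineZeros_of_kappa_eq_zero hP hv hκ, sum_singleton,
    zero_pow hk₀]

theorem ncard_cone_of_ind_eq_one (h : LinearIndependent F ![u, w, P]) (hP : D.ind P = 1) :
    {y | D.ind y = 0}.ncard =
      1 + (q - 1) * (q + 1 + p * ∑ d : Option F, D.kappa P (comb u w (dir d))) := by
  rw [D.ncard_cone D.finrank_eq h, D.lineZeros_zero_of_ind_eq_one hP, card_singleton,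
    sum_congr rfl fun d _ => D.card_lineZeros hP _, sum_add_distrib, ← mul_sum, sum_const,
    card_univ, Fintype.card_option, smul_eq_mul, mul_one]

theorem sum_kappa_le (h : LinearIndependent F ![u, w, P]) (hP : D.ind P = 1) :
    ∑ d : Option F, D.kappa P (comb u w (dir d)) ≤ q + 1 := by
  have hle := D.ncard_le
  rw [D.ncard_cone_of_ind_eq_one h hP, D.card_field, add_comm 1, add_le_add_iff_right,
    mul_comm] at hle
  have hp := D.four_lt
  have hle := Nat.le_of_mul_le_mul_right hle (Nat.sub_pos_of_lt (by nlinarith))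
  rw [D.card_field]
  refine Nat.le_of_mul_le_mul_left (c := p) ?_ (by omega)
  linarith [show p * (p ^ 2 + 1) = p ^ 3 + p by ring]

/- The average of `κ` is at most `1`, so the excess over `1` is compensated by tangents. -/
theorem mul_card_badDirs_le (h : LinearIndependent F ![u, w, P]) (hP : D.ind P = 1) {m : ℕ}
    (hm : ∀ d ∈ D.badDirs P u w, m < D.kappa P (comb u w (dir d))) :
    m * #(D.badDirs P u w) ≤ #(D.tangentDirs P u w) :=
  calc m * #(D.badDirs P u w) = ∑ _d ∈ D.badDirs P u w, m := by
        rw [sum_const, smul_eq_mul, mul_comm]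
    _ ≤ ∑ d ∈ D.badDirs P u w, (D.kappa P (comb u w (dir d)) - 1) :=
        sum_le_sum fun d hd => Nat.le_sub_one_of_lt (hm d hd)
    _ ≤ ∑ d : Option F, (D.kappa P (comb u w (dir d)) - 1) :=
        sum_le_univ_sum_of_nonneg fun _ => Nat.zero_le _
    _ ≤ #(D.tangentDirs P u w) := by
        have := D.sum_kappa_add_card_tangentDirs P u w
        have := D.sum_kappa_le h hP
        omega

theorem card_badDirs_le (h : LinearIndependent F ![u, w, P]) (hP : D.ind P = 1) :
    #(D.badDirs P u w) ≤ #(D.tangentDirs P u w) := by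
  simpa using D.mul_card_badDirs_le h hP (m := 1) fun d hd => (mem_filter.1 hd).2

end SmallPlaneSection

section NormCoeff

variable {F : Type*} [Field F] {p : ℕ}

/- The polynomial `X * ∏ (X - b)`, over the other elements `b` of `A`, vanishes on `A` except at
`a`, and its values sum to a combination of the power sums of `A`. -/
theorem exists_sum_pow_ne_zero {A : Finset F} {a : F} (ha : a ∈ A) (ha₀ : a ≠ 0) :
    ∃ k, k ≠ 0 ∧ k ≤ #A ∧ ∑ b ∈ A, b ^ k ≠ 0 := by
  by_contra! h
  set f : Polynomial F := Polynomial.X * rootPoly (A.erase a) with hf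
  have hdeg : f.natDegree ≤ #A := by
    refine Polynomial.natDegree_mul_le.trans ?_
    rw [natDegree_rootPoly, Polynomial.natDegree_X, card_erase_of_mem ha]
    have := card_pos.2 ⟨a, ha⟩
    omega
  have hzero : ∑ b ∈ A, f.eval b = 0 := by
    simp only [Polynomial.eval_eq_sum_range' (Nat.lt_succ_of_le hdeg)]
    rw [sum_comm]
    refine sum_eq_zero fun k hk => ?_
    rw [← mul_sum]
    rcases eq_or_ne k 0 with rfl | hk₀
    · rw [hf, Polynomial.coeff_X_mul_zero, zero_mul]
    · rw [h k hk₀ (Nat.le_of_lt_succ (mem_range.1 hk)), mul_zero]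
  rw [sum_eq_single_of_mem a ha fun b hb hba => ?_, hf, Polynomial.eval_mul, Polynomial.eval_X,
    mul_eq_zero, or_iff_right ha₀, eval_rootPoly_eq_zero_iff] at hzero
  · exact notMem_erase a A hzero
  · rw [hf, Polynomial.eval_mul, eval_rootPoly_eq_zero_iff.2 (mem_erase.2 ⟨hba, hb⟩), mul_zero]

/-- The coefficient of `T ^ (p ^ 2 - 1 - k)` in `(T ^ (p + 1) - y) ^ (p - 1)` over a field of
characteristic `p`. -/
def normCoeff (p : ℕ) (y : F) (k : ℕ) : F := if p + 1 ∣ k then y ^ (k / (p + 1)) else 0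

theorem normCoeff_zero_left {k : ℕ} (hk : k ≠ 0) : normCoeff p (0 : F) k = 0 := by
  rw [normCoeff, ite_eq_right_iff]
  intro hdvd
  exact zero_pow (Nat.div_pos (Nat.le_of_dvd (Nat.pos_of_ne_zero hk) hdvd) p.succ_pos).ne'

theorem normCoeff_of_eq_mul_add (y : F) {k j r : ℕ} (hk : k = (p + 1) * j + r) (h₀ : r ≠ 0)
    (hr : r < p + 1) : normCoeff p y k = 0 := by
  rw [normCoeff, if_neg]
  rw [hk, Nat.dvd_add_right (dvd_mul_right _ _)]
  exact Nat.not_dvd_of_pos_of_lt (Nat.pos_of_ne_zero h₀) hr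

theorem normCoeff_mem_binaryForm {f : F × F → F} (hf : f ∈ binaryForm F (p + 1)) (k : ℕ) :
    (fun x => normCoeff p (f x) k) ∈ binaryForm F k := by
  by_cases hdvd : p + 1 ∣ k
  · have h := pow_mem_binaryForm hf (k / (p + 1))
    rw [Nat.div_mul_cancel hdvd] at h
    simp only [normCoeff, if_pos hdvd]
    exact h
  · simp only [normCoeff, if_neg hdvd]
    exact (binaryForm F k).zero_mem

variable [Fact p.Prime] [CharP F p]

theorem sum_normCoeff_mul_pow (y T : F) :
    ∑ k ∈ range (p ^ 2), normCoeff p y k * T ^ (p ^ 2 - 1 - k) = (T ^ (p + 1) - y) ^ (p - 1) := by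
  have hgeom := sub_pow_char_pow_sub_one p one_ne_zero (T ^ (p + 1)) y
  rw [pow_one] at hgeom
  have hdvd : ∀ {k}, p + 1 ∣ k → k < p ^ 2 → ∃ j < p, (p + 1) * j = k := by
    rintro _ ⟨j, rfl⟩ hj
    exact ⟨j, by nlinarith, rfl⟩
  have hmem : ∀ j ∈ range p, (p + 1) * j ∈ range (p ^ 2) := fun j hj => by
    rw [mem_range] at hj ⊢
    nlinarith
  rw [hgeom, eq_comm]
  refine sum_of_injOn ((p + 1) * ·) (mul_right_injective₀ p.succ_ne_zero).injOn hmem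
    (fun k hk hne => ?_) fun j hj => ?_
  · rw [normCoeff, if_neg, zero_mul]
    intro h
    obtain ⟨j, hj, rfl⟩ := hdvd h (mem_range.1 hk)
    exact hne ⟨j, mem_coe.2 (mem_range.2 hj), rfl⟩
  · obtain ⟨m, rfl⟩ := Nat.exists_eq_add_of_lt (mem_range.1 hj)
    rw [normCoeff, if_pos (dvd_mul_right _ _), Nat.mul_div_cancel_left _ (Nat.succ_pos _),
      mul_comm, ← pow_mul]
    congr 2
    rw [show j + m + 1 - 1 - j = m by omega, Nat.sub_sub]
    refine (Nat.sub_eq_of_eq_add ?_).symm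
    ring

theorem sum_normCoeff_mul_pow_eq_ite [Fintype F] (hF : Fintype.card F = p ^ 2) {y : F}
    (hy : y ^ p = y) (T : F) : ∑ k ∈ range (p ^ 2), normCoeff p y k * T ^ (p ^ 2 - 1 - k) =
      if T ^ (p + 1) = y then 0 else 1 := by
  have hp := (Fact.out : p.Prime).one_lt
  rw [sum_normCoeff_mul_pow]
  split_ifs with h
  · rw [h, sub_self, zero_pow (by omega)]
  · refine mul_right_cancel₀ (sub_ne_zero.2 h) ?_
    have hT : T ^ p ^ 2 = T := by rw [← hF, FiniteField.pow_card]
    rw [← pow_succ, Nat.sub_add_cancel hp.le, sub_pow_char, hy, ← pow_mul,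
      show (p + 1) * p = p ^ 2 + p by ring, pow_add, hT, pow_succ', one_mul]

end NormCoeff

namespace SmallPlaneSection

variable {F E : Type*} [Field F] [Fintype F] [AddCommGroup E] [Module F E] {p : ℕ}
  (D : SmallPlaneSection F E p) {P v u w : E} {k : ℕ}

local notation "q" => Fintype.card F

/-- Along every line through `P`, the sum of squares of the affine coordinates of the points of the
cone is the square of their sum; this holds for all points off a Hermitian curve. -/
def IsFlatAt (P : E) : Prop := ∀ v, D.lineCoeff 2 P v = D.lineCoeff 1 P v ^ 2

theorem lineZeros_self_of_notMem (hP : D.ind P = 1) {x : F} (hx : x ∉ D.lineZeros P v) :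
    D.lineZeros (v + x • P) P = (D.lineZeros P v).image fun a => (a - x)⁻¹ := by
  have h₀ : 0 ∉ (D.lineZeros P v).image (· - x) := by
    rw [mem_image]
    rintro ⟨a, ha, hax⟩
    exact hx (sub_eq_zero.1 hax ▸ ha)
  rw [D.lineZeros_swap hP, D.lineZeros_add_smul, erase_eq_of_notMem h₀, image_image]
  rfl

variable [Fact p.Prime]

theorem card_tangentDirs_le (hT : D.IsPolarTriple P u w) (hk₀ : k ≠ 0) (hk : k < q) {x : F × F}
    (hx : D.lineCoeff k P (comb u w x) ≠ 0) : #(D.tangentDirs P u w) ≤ k := by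
  by_contra! hlt
  refine hx (congrFun (eq_zero_of_mem_binaryForm (D.lineCoeff_comb_mem_binaryForm k P u w)
    (fun d hd => ?_) hlt) x)
  exact D.lineCoeff_eq_zero_of_kappa_eq_zero hT.ind_eq_one (hT.lineCoeff_one_comb _)
    (mem_filter.1 hd).2 hk₀ hk

theorem lineCoeff_eq_zero_of_kappa_le_one (hflat : ∀ P, D.ind P = 1 → D.IsFlatAt P)
    (hP : D.ind P = 1) (hv : D.lineCoeff 1 P v = 0) (hκ : D.kappa P v ≤ 1) (hk₀ : k ≠ 0)
    (hk : k < p) : D.lineCoeff k P v = 0 := by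
  have := D.charP
  have hq := D.five_mul_le_card
  have hp := D.four_lt
  rcases Nat.le_one_iff_eq_zero_or_eq_one.1 hκ with hκ | hκ
  · exact D.lineCoeff_eq_zero_of_kappa_eq_zero hP hv hκ hk₀ (by omega)
  rw [D.lineCoeff_eq_sum_pow hP v (by omega)]
  refine sum_pow_eq_zero_of_sum_inv_sq (by omega) ?_ ?_ (fun x hx => ?_) hk₀ hk
  · rw [D.card_lineZeros hP, hκ, mul_one, add_comm]
  · simpa only [pow_one, hv] using (D.lineCoeff_eq_sum_pow hP v (k := 1) (by omega)).symm
  · have hx₁ := D.ind_ne_zero_iff.1 (mt D.mem_lineZeros.2 hx)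
    have hinj : Set.InjOn (fun a : F => (a - x)⁻¹) (D.lineZeros P v) := fun a _ b _ hab =>
      sub_left_injective (inv_injective hab)
    have h := hflat _ hx₁ P
    rw [D.lineCoeff_eq_sum_pow hx₁ P D.two_lt_card,
      D.lineCoeff_eq_sum_pow hx₁ P (one_lt_two.trans D.two_lt_card),
      D.lineZeros_self_of_notMem hP hx, sum_image hinj, sum_image hinj] at h
    simpa only [← neg_sub x, inv_neg, neg_sq, pow_one, sum_neg_distrib] using h

theorem lineCoeff_comb_eq_zero (hflat : ∀ P, D.ind P = 1 → D.IsFlatAt P)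
    (hT : D.IsPolarTriple P u w) (x : F × F) (hk₀ : k ≠ 0) (hk : k < p) :
    D.lineCoeff k P (comb u w x) = 0 := by
  refine congrFun (eq_zero_of_mem_binaryForm (D.lineCoeff_comb_mem_binaryForm k P u w)
    (S := D.goodDirs P u w) (fun d hd => ?_) ?_) x
  · exact D.lineCoeff_eq_zero_of_kappa_le_one hflat hT.ind_eq_one (hT.lineCoeff_one_comb _)
      (mem_filter.1 hd).2 hk₀ hk
  · have := D.card_goodDirs_add_card_badDirs P u w
    have := D.card_badDirs_le hT.linearIndependent hT.ind_eq_one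
    have := D.card_tangentDirs_le_card_goodDirs P u w
    have := D.five_mul_le_card
    omega

theorem lineCoeff_succ_char_pow_char (hP : D.ind P = 1) (v : E) :
    D.lineCoeff (p + 1) P v ^ p = D.lineCoeff (p + 1) P v := by
  have := D.charP
  have hq := D.five_mul_le_card
  have hp := D.four_lt
  refine D.lineCoeff_pow_char p hP v (by omega) (by omega) fun x => ?_
  rw [show (p + 1) * p = p ^ 2 + p by ring, pow_add, D.pow_sq_eq_self, pow_succ']

theorem lineCoeff_succ_char_ne_zero (hP : D.ind P = 1)
    (hv : ∀ k, k ≠ 0 → k < p → D.lineCoeff k P v = 0) (hκ : D.kappa P v = 1) :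
    D.lineCoeff (p + 1) P v ≠ 0 := by
  have := D.charP
  have hq := D.five_mul_le_card
  have hp := D.four_lt
  rw [D.lineCoeff_eq_sum_pow hP v (by omega)]
  refine sum_pow_succ_char_ne_zero (by rw [D.card_lineZeros hP, hκ, mul_one, add_comm])
    fun k hk₀ hk => ?_
  rw [← D.lineCoeff_eq_sum_pow hP v (by omega), hv k hk₀ hk]

theorem mem_lineZeros_iff_of_kappa_le_one (hP : D.ind P = 1)
    (hv : ∀ k, k ≠ 0 → k < p → D.lineCoeff k P v = 0) (hκ : D.kappa P v ≤ 1) (T : F) :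
    T ∈ D.lineZeros P v ↔ T ^ (p + 1) = D.lineCoeff (p + 1) P v := by
  have hq := D.five_mul_le_card
  have hp := D.four_lt
  rcases Nat.le_one_iff_eq_zero_or_eq_one.1 hκ with hκ | hκ
  · have hv₁ := hv 1 one_ne_zero (by omega)
    rw [D.lineZeros_of_kappa_eq_zero hP hv₁ hκ, mem_singleton,
      D.lineCoeff_eq_zero_of_kappa_eq_zero hP hv₁ hκ p.succ_ne_zero (by omega),
      pow_eq_zero_iff p.succ_ne_zero]
  · rw [D.lineCoeff_eq_sum_pow hP v (by omega)]
    refine mem_iff_pow_eq_of_sum_pow_eq_zero D.card_field (by omega)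
      (by rw [D.card_lineZeros hP, hκ, mul_one, add_comm]) (fun k hk₀ hk => ?_) T
    rw [← D.lineCoeff_eq_sum_pow hP v (by omega), hv k hk₀ hk]

theorem lineCoeff_eq_normCoeff_of_kappa_le_one (hP : D.ind P = 1)
    (hv : ∀ k, k ≠ 0 → k < p → D.lineCoeff k P v = 0) (hκ : D.kappa P v ≤ 1) (hk : k < q) :
    D.lineCoeff k P v = normCoeff p (D.lineCoeff (p + 1) P v) k := by
  have := D.charP
  refine eq_of_forall_sum_mul_pow_eq (c := fun k => D.lineCoeff k P v)
    (d := normCoeff p (D.lineCoeff (p + 1) P v)) (fun T => ?_) hk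
  rw [← D.ind_add_smul, D.ind_add_smul_eq_ite, D.card_field,
    sum_normCoeff_mul_pow_eq_ite D.card_field (D.lineCoeff_succ_char_pow_char hP v)]
  exact if_congr (D.mem_lineZeros_iff_of_kappa_le_one hP hv hκ T) rfl rfl

theorem le_card_lineZeros (hP : D.ind P = 1) (hκ : D.kappa P v ≠ 0) (hk : k ≤ q)
    (hv : ∀ j, j ≠ 0 → j < k → D.lineCoeff j P v = 0) : k ≤ #(D.lineZeros P v) := by
  have hcard := D.card_lineZeros hP v
  have hpos := Nat.mul_pos (Fact.out : p.Prime).pos (Nat.pos_of_ne_zero hκ)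
  obtain ⟨a, ha, ha₀⟩ := exists_mem_ne (s := D.lineZeros P v) (by omega) 0
  obtain ⟨j, hj₀, hj, hne⟩ := exists_sum_pow_ne_zero ha ha₀
  by_contra! hlt
  refine hne ?_
  rw [← D.lineCoeff_eq_sum_pow hP v (by omega), hv j hj₀ (by omega)]

end SmallPlaneSection

theorem false_of_excess_bounds {p k m : ℕ} (hp : 4 < p) (hk : k + p + 1 ≤ p ^ 2)
    (hk₂ : p ^ 2 + 1 ≤ 2 * k) (hkm : k ≤ p * (m + 1) + 1) (hmk : m * (p ^ 2 + 1 - k) ≤ k) :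
    False := by
  obtain ⟨y, hy⟩ := Nat.exists_eq_add_of_le (show k ≤ p ^ 2 + 1 by omega)
  rw [hy, Nat.add_sub_cancel_left] at hmk
  rcases Nat.lt_or_ge y (p + 3) with hlt | hge
  · obtain rfl : y = p + 2 := by omega
    have hm : p ≤ m + 2 := by
      by_contra! hm
      nlinarith
    nlinarith
  · have hupper : y * (p ^ 2 - y) ≤ p ^ 3 + p := by
      obtain ⟨j, rfl⟩ : ∃ j, k = j + 1 := ⟨k - 1, by omega⟩
      have hj : p ^ 2 - y = j := by omega
      rw [hj]
      nlinarith
    obtain ⟨z, hz⟩ := Nat.exists_eq_add_of_le (show y ≤ p ^ 2 by omega)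
    rw [hz, Nat.add_sub_cancel_left] at hupper
    nlinarith

namespace SmallPlaneSection

variable {F E : Type*} [Field F] [Fintype F] [AddCommGroup E] [Module F E] {p : ℕ}
  (D : SmallPlaneSection F E p) {P v u w : E} {k : ℕ}

local notation "q" => Fintype.card F

variable [Fact p.Prime]

theorem lineCoeff_eq_normCoeff_of_ne_zero (hflat : ∀ P, D.ind P = 1 → D.IsFlatAt P)
    (hT : D.IsPolarTriple P u w) {x₀ : F × F} (hx₀ : D.lineCoeff (p + 1) P (comb u w x₀) ≠ 0)
    (hk : k + p < q) (x : F × F) :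
    D.lineCoeff k P (comb u w x) = normCoeff p (D.lineCoeff (p + 1) P (comb u w x)) k := by
  have hq := D.five_mul_le_card
  have hp := D.four_lt
  have hform := (binaryForm F k).sub_mem (D.lineCoeff_comb_mem_binaryForm k P u w)
    (normCoeff_mem_binaryForm (D.lineCoeff_comb_mem_binaryForm (p + 1) P u w) k)
  refine sub_eq_zero.1 (congrFun (eq_zero_of_mem_binaryForm hform (S := D.goodDirs P u w)
    (fun d hd => sub_eq_zero.2 ?_) ?_) x)
  · exact D.lineCoeff_eq_normCoeff_of_kappa_le_one hT.ind_eq_one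
      (fun j hj₀ hj => D.lineCoeff_comb_eq_zero hflat hT _ hj₀ hj) (mem_filter.1 hd).2 (by omega)
  · have := D.card_goodDirs_add_card_badDirs P u w
    have := D.card_badDirs_le hT.linearIndependent hT.ind_eq_one
    have := D.card_tangentDirs_le hT p.succ_ne_zero (by omega) hx₀
    omega

/- If `k` is minimal with `D.lineCoeff k P ≠ 0`, at most `k` directions are tangent, so there are
many lines with more than `p + 1` points; these have at least `k` points, too many in total. -/
theorem lineCoeff_eq_zero_of_forall_eq_zero (hflat : ∀ P, D.ind P = 1 → D.IsFlatAt P)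
    (hT : D.IsPolarTriple P u w) (hzero : ∀ x : F × F, D.lineCoeff (p + 1) P (comb u w x) = 0)
    (hk₀ : k ≠ 0) (hk : k + p < q) (x : F × F) : D.lineCoeff k P (comb u w x) = 0 := by
  have hp := D.four_lt
  induction k using Nat.strong_induction_on generalizing x with
  | _ k ih =>
  have hlow : ∀ (x : F × F) j, j ≠ 0 → j < k → D.lineCoeff j P (comb u w x) = 0 := fun x j hj₀ hj =>
    ih j hj hj₀ (by omega) x
  by_contra hx
  have htangent := D.card_tangentDirs_le hT hk₀ (by omega) hx
  have hgood : #(D.goodDirs P u w) ≤ #(D.tangentDirs P u w) := by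
    refine card_le_card fun d hd => mem_filter.2 ⟨mem_univ d, ?_⟩
    refine (Nat.le_one_iff_eq_zero_or_eq_one.1 (mem_filter.1 hd).2).resolve_right fun hκ => ?_
    exact D.lineCoeff_succ_char_ne_zero hT.ind_eq_one
      (fun j hj₀ hj => D.lineCoeff_comb_eq_zero hflat hT _ hj₀ hj) hκ (hzero _)
  have hsplit := D.card_goodDirs_add_card_badDirs P u w
  have hbad := D.card_badDirs_le hT.linearIndependent hT.ind_eq_one
  have hexcess : (k - 2) / p * #(D.badDirs P u w) ≤ #(D.tangentDirs P u w) := by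
    refine D.mul_card_badDirs_le hT.linearIndependent hT.ind_eq_one fun d hd => ?_
    have hκ := (mem_filter.1 hd).2
    have hle := D.le_card_lineZeros hT.ind_eq_one (by omega) (by omega) (hlow (dir d))
    rw [D.card_lineZeros hT.ind_eq_one] at hle
    rw [Nat.div_lt_iff_lt_mul (by omega), mul_comm]
    have : 0 < p * D.kappa P (comb u w (dir d)) := Nat.mul_pos (by omega) (by omega)
    omega
  rw [D.card_field] at hk hsplit
  refine false_of_excess_bounds (m := (k - 2) / p) hp hk (by omega) ?_ ?_
  · have := Nat.div_add_mod (k - 2) p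
    have := Nat.mod_lt (k - 2) (show p > 0 by omega)
    rw [mul_add]
    omega
  · exact (Nat.mul_le_mul_left _ (by omega)).trans (hexcess.trans htangent)

theorem lineCoeff_comb_eq_normCoeff_of_add_lt (hflat : ∀ P, D.ind P = 1 → D.IsFlatAt P)
    (hT : D.IsPolarTriple P u w) (hk : k + p < q) (x : F × F) :
    D.lineCoeff k P (comb u w x) = normCoeff p (D.lineCoeff (p + 1) P (comb u w x)) k := by
  by_cases hzero : ∀ x : F × F, D.lineCoeff (p + 1) P (comb u w x) = 0
  · rcases eq_or_ne k 0 with rfl | hk₀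
    · rw [D.lineCoeff_eq_sum_pow hT.ind_eq_one _ (by omega)]
      simp only [pow_zero, sum_const, nsmul_one, D.natCast_card_lineZeros, hT.ind_eq_one]
      rw [normCoeff, if_pos (dvd_zero _), Nat.zero_div, pow_zero]
    · rw [D.lineCoeff_eq_zero_of_forall_eq_zero hflat hT hzero hk₀ hk, hzero,
        normCoeff_zero_left hk₀]
  · push Not at hzero
    obtain ⟨x₀, hx₀⟩ := hzero
    exact D.lineCoeff_eq_normCoeff_of_ne_zero hflat hT hx₀ hk x

/- For `k = p ^ 2 - p + i` the `p`-th power of `D.lineCoeff k` is `D.lineCoeff (p * i + p - 1)`, to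
which the previous bound applies. -/
theorem lineCoeff_comb_eq_normCoeff (hflat : ∀ P, D.ind P = 1 → D.IsFlatAt P)
    (hT : D.IsPolarTriple P u w) (hk : k + 1 < q) (x : F × F) :
    D.lineCoeff k P (comb u w x) = normCoeff p (D.lineCoeff (p + 1) P (comb u w x)) k := by
  have := D.charP
  have hp := D.four_lt
  rcases Nat.lt_or_ge (k + p) q with hlt | hge
  · exact D.lineCoeff_comb_eq_normCoeff_of_add_lt hflat hT hlt x
  rw [D.card_field] at hk hge
  obtain ⟨n, hn⟩ : ∃ n, p = n + 2 := ⟨p - 2, by omega⟩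
  have hpn : p ^ 2 = p * (n + 1) + p := by rw [hn]; ring
  obtain ⟨i, rfl⟩ : ∃ i, k = p * (n + 1) + i := Nat.exists_eq_add_of_le (by omega)
  have hmod : p * (n + 1) + i = (p + 1) * n + (i + 2) := by rw [hn]; ring
  have hmod' : p * i + (n + 1) = (p + 1) * i + (n + 1 - i) := by rw [add_mul, one_mul]; omega
  have hlt : p * i + (n + 1) + p < p ^ 2 := by nlinarith
  have hpow : D.lineCoeff (p * (n + 1) + i) P (comb u w x) ^ p =
      D.lineCoeff (p * i + (n + 1)) P (comb u w x) := by
    refine D.lineCoeff_pow_char p hT.ind_eq_one _ (by rw [D.card_field]; omega)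
      (by rw [D.card_field]; omega) fun z => ?_
    rw [show (p * (n + 1) + i) * p = p ^ 2 * (n + 1) + p * i by ring, pow_add, pow_mul,
      D.pow_sq_eq_self, ← pow_add, add_comm]
  rw [D.lineCoeff_comb_eq_normCoeff_of_add_lt (k := p * i + (n + 1)) hflat hT
      (by rwa [D.card_field]), normCoeff_of_eq_mul_add _ hmod' (by omega) (by omega)] at hpow
  rw [eq_zero_of_pow_eq_zero hpow, normCoeff_of_eq_mul_add _ hmod (by omega) (by omega)]

/- The constant `-1` would put a whole affine line in the cone, whereas the number of its points in
the cone is `1` modulo `p`. -/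
theorem eq_zero_of_forall_ind_add_smul_eq_ite_add (hP : D.ind P = 1) (hk : k ≠ 0) {y C : F}
    (h : ∀ T : F, D.ind (v + T • P) = (if T ^ k = y then 0 else 1) + C) : C = 0 := by
  have := D.charP
  have htwo : (2 : F) ≠ 0 := by
    have := D.four_lt
    exact_mod_cast natCast_ne_zero_of_lt_char F p two_ne_zero (show 2 < p by omega)
  obtain ⟨T₀, hT₀⟩ : ∃ T₀ : F, T₀ ^ k ≠ y := by
    rcases eq_or_ne y 0 with rfl | hy
    · exact ⟨1, by rw [one_pow]; exact one_ne_zero⟩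
    · exact ⟨0, by rw [zero_pow hk]; exact hy.symm⟩
  have hC := h T₀
  rw [if_neg hT₀] at hC
  rcases D.ind_eq_zero_or_eq_one (v + T₀ • P) with h₀ | h₁
  · obtain rfl : C = -1 := by linear_combination h₀ - hC
    have hall : D.lineZeros P v = univ := eq_univ_of_forall fun T => D.mem_lineZeros.2 <|
      (D.ind_eq_zero_or_eq_one _).resolve_right fun h₁ => by
        rw [h T] at h₁
        split_ifs at h₁
        · exact htwo (by linear_combination -h₁)
        · exact one_ne_zero (by linear_combination -h₁)
    have hcard := D.natCast_card_lineZeros P v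
    rw [hall, card_univ, FiniteField.cast_card_eq_zero, hP] at hcard
    exact absurd hcard zero_ne_one
  · linear_combination h₁ - hC

theorem ind_comb_add_smul (hflat : ∀ P, D.ind P = 1 → D.IsFlatAt P)
    (hT : D.IsPolarTriple P u w) (x : F × F) (T : F) :
    D.ind (comb u w x + T • P) =
      if T ^ (p + 1) = D.lineCoeff (p + 1) P (comb u w x) then 0 else 1 := by
  have := D.charP
  obtain ⟨m, hm⟩ : ∃ m, p ^ 2 = m + 1 :=
    Nat.exists_eq_add_one.2 (D.card_field ▸ Fintype.card_pos)
  have hC : ∀ T : F, D.ind (comb u w x + T • P) =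
      (if T ^ (p + 1) = D.lineCoeff (p + 1) P (comb u w x) then 0 else 1) +
        (D.lineCoeff m P (comb u w x) -
          normCoeff p (D.lineCoeff (p + 1) P (comb u w x)) m) := fun T => by
    have hlow : ∀ k ∈ range m, D.lineCoeff k P (comb u w x) =
        normCoeff p (D.lineCoeff (p + 1) P (comb u w x)) k := fun k hk => by
      refine D.lineCoeff_comb_eq_normCoeff hflat hT ?_ x
      rw [D.card_field, hm]
      exact Nat.succ_lt_succ (mem_range.1 hk)
    rw [D.ind_add_smul, ← sum_normCoeff_mul_pow_eq_ite D.card_field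
      (D.lineCoeff_succ_char_pow_char hT.ind_eq_one _), D.card_field, hm, sum_range_succ,
      sum_range_succ, sum_congr rfl fun k hk => by rw [hlow k hk], Nat.add_sub_cancel,
      Nat.sub_self, pow_zero]
    ring
  rw [hC, D.eq_zero_of_forall_ind_add_smul_eq_ite_add hT.ind_eq_one p.succ_ne_zero hC, add_zero]

end SmallPlaneSection

section HermitianForm

variable {F : Type*} [Field F] {p : ℕ}

/-- The binary Hermitian form, with respect to `x ↦ x ^ p`, with matrix `!![α, β; β ^ p, δ]`. -/
def hermitianForm (p : ℕ) (α β δ : F) (x : F × F) : F :=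
  α * x.1 ^ (p + 1) + β * (x.1 * x.2 ^ p) + β ^ p * (x.2 * x.1 ^ p) + δ * x.2 ^ (p + 1)

variable [Fact p.Prime] [CharP F p]

/- Averaging the coefficients of `f` and of `f ^ p` makes them Hermitian. -/
theorem exists_eq_hermitianForm (hp : p ≠ 2) (hF : ∀ x : F, x ^ p ^ 2 = x) {f : F × F → F}
    {a b c d : F} (hf : ∀ x, f x = a * x.1 ^ (p + 1) + b * (x.1 * x.2 ^ p) +
      c * (x.2 * x.1 ^ p) + d * x.2 ^ (p + 1)) (hfp : ∀ x, f x ^ p = f x) :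
    ∃ α β δ : F, α ^ p = α ∧ δ ^ p = δ ∧ f = hermitianForm p α β δ := by
  have htwo : (2 : F) ≠ 0 := Ring.two_ne_zero (by rwa [ringChar.eq F p])
  have hpp : ∀ x : F, (x ^ p) ^ p = x := fun x => by rw [← pow_mul, ← sq, hF]
  have havg : ∀ x y : F, ((x + y ^ p) / 2) ^ p = (y + x ^ p) / 2 := fun x y => by
    rw [div_pow, add_pow_char, hpp, ← frobenius_def p (2 : F), map_ofNat, add_comm]
  refine ⟨(a + a ^ p) / 2, (b + c ^ p) / 2, (d + d ^ p) / 2, havg a a, havg d d, ?_⟩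
  ext x
  have hf' : f x = a ^ p * x.1 ^ (p + 1) + b ^ p * (x.2 * x.1 ^ p) +
      c ^ p * (x.1 * x.2 ^ p) + d ^ p * x.2 ^ (p + 1) := by
    rw [← hfp, hf]
    simp only [add_pow_char, mul_pow, pow_succ, hpp]
    ring
  rw [hermitianForm, havg]
  field_simp
  linear_combination hf x + hf'

theorem hermitianForm_add_smul_of_det_eq_zero {α β δ : F} (hF : ∀ x : F, x ^ p ^ 2 = x)
    (hα : α ^ p = α) (hdet : α * δ = β ^ (p + 1)) (a c : F) :
    hermitianForm p α β δ (a - c * β ^ p, c * α) = α * a ^ (p + 1) := by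
  have hpp : ∀ x : F, (x ^ p) ^ p = x := fun x => by rw [← pow_mul, ← sq, hF]
  rw [hermitianForm, pow_succ (a - c * β ^ p), sub_pow_char, mul_pow, mul_pow, mul_pow, hpp, hα,
    pow_succ α, hα, pow_succ a, pow_succ c]
  rw [pow_succ] at hdet
  linear_combination (α * c * c ^ p) * hdet

end HermitianForm

namespace SmallPlaneSection

variable {F E : Type*} [Field F] [Fintype F] [AddCommGroup E] [Module F E] {p : ℕ}
  (D : SmallPlaneSection F E p) {P u w : E} {α β δ : F}

theorem isLine_of_ind_eq_zero_iff (hE : LinearIndependent F ![u, w, P])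
    (h : ∀ a b c : F, D.ind (a • u + b • w + c • P) = 0 ↔ c = 0) : D.IsLine := by
  refine ⟨Submodule.span F {u, w}, finrank_span_pair_of_linearIndependent ?_, fun y => ?_⟩
  · rw [LinearIndependent.pair_iff]
    intro s t hst
    obtain ⟨hs, ht, -⟩ := linearIndependent_triple_iff.1 hE s t 0 (by rw [zero_smul, hst, add_zero])
    exact ⟨hs, ht⟩
  · obtain ⟨a, b, c, rfl⟩ := exists_eq_combination D.finrank_eq hE y
    rw [h, Submodule.mem_span_pair]
    constructor
    · rintro rfl
      exact ⟨a, b, by rw [zero_smul, add_zero]⟩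
    · rintro ⟨s, t, hst⟩
      exact (linearIndependent_triple_iff.1 hE (a - s) (b - t) c
        (by rw [← sub_eq_zero.2 hst.symm]; module)).2.2

variable [Fact p.Prime]

theorem isHermitianCurve_of_ind_eq_zero_iff (hE : LinearIndependent F ![u, w, P])
    (hα : α ^ p = α) (hδ : δ ^ p = δ) (hdet : α * δ ≠ β ^ (p + 1))
    (h : ∀ a b c : F, D.ind (a • u + b • w + c • P) = 0 ↔
      c ^ (p + 1) = hermitianForm p α β δ (a, b)) : D.IsHermitianCurve p := by
  have hp := (Fact.out : p.Prime)
  have hodd : Odd p := hp.odd_of_ne_two (by have := D.four_lt; omega)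
  have hβ : (β ^ p) ^ p = β := by rw [← pow_mul, ← sq, D.pow_sq_eq_self]
  have hrank : Fintype.card (Fin 3) = finrank F E := by rw [D.finrank_eq, Fintype.card_fin]
  set b := basisOfLinearIndependentOfCardEqFinrank hE hrank with hb
  refine ⟨b.equivFun.symm, !![-α, -β, 0; -β ^ p, -δ, 0; 0, 0, 1], ?_, ?_, fun y => ?_⟩
  · rw [isUnit_iff_ne_zero, Matrix.det_fin_three]
    simp only [Matrix.of_apply, Matrix.cons_val]
    refine fun h₀ => hdet ?_
    rw [pow_succ]
    linear_combination h₀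
  · ext i j
    fin_cases i <;> fin_cases j <;> simp [hodd.neg_pow, hα, hδ, hβ, hp.ne_zero]
  · have hy : b.equivFun.symm y = y 0 • u + y 1 • w + y 2 • P := by
      simp [hb, Basis.equivFun_symm_apply, Fin.sum_univ_three]
    rw [hy, h, ← sub_eq_zero]
    simp only [Fin.sum_univ_three, Matrix.of_apply, Matrix.cons_val, hermitianForm, pow_succ]
    ring_nf

theorem card_lineZeros_of_mem_iff_pow_eq (hP : D.ind P = 1) (hα : α ≠ 0)
    (h : ∀ c, c ∈ D.lineZeros P u ↔ c ^ (p + 1) = α) : #(D.lineZeros P u) = p + 1 := by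
  have := D.charP
  have hp := D.four_lt
  have hodd : Odd p := (Fact.out : p.Prime).odd_of_ne_two (by omega)
  have hchar : ringChar F ≠ 2 := by rw [ringChar.eq F p]; omega
  have hle : #(D.lineZeros P u) ≤ p + 1 := by
    have hroots : D.lineZeros P u ⊆ (Polynomial.nthRoots (p + 1) α).toFinset := fun c hc => by
      rw [Multiset.mem_toFinset, Polynomial.mem_nthRoots p.succ_pos]
      exact (h c).1 hc
    exact (card_le_card hroots).trans
      ((Multiset.toFinset_card_le _).trans (Polynomial.card_nthRoots _ _))
  have hlt : 1 < #(D.lineZeros P u) := by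
    obtain ⟨c, hc⟩ := D.lineZeros_nonempty hP u
    refine one_lt_card.2 ⟨c, hc, -c, ?_, fun hneg => hα ?_⟩
    · rwa [h, hodd.add_one.neg_pow, ← h]
    · have hc₀ := (Ring.eq_self_iff_eq_zero_of_char_ne_two hchar).1 hneg.symm
      rw [hc₀, h, zero_pow p.succ_ne_zero] at hc
      exact hc.symm
  have hcard := D.card_lineZeros hP u
  have hκ : D.kappa P u ≠ 0 := fun hκ => by
    rw [hκ, mul_zero] at hcard
    omega
  have := Nat.le_mul_of_pos_right p (Nat.pos_of_ne_zero hκ)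
  omega

theorem isPencil_of_ind_eq_zero_iff (hE : LinearIndependent F ![u, w, P]) (hP : D.ind P = 1)
    (hα : α ^ p = α) (hα₀ : α ≠ 0) (hdet : α * δ = β ^ (p + 1))
    (h : ∀ a b c : F, D.ind (a • u + b • w + c • P) = 0 ↔
      c ^ (p + 1) = hermitianForm p α β δ (a, b)) : D.IsPencil (p + 1) := by
  have := D.charP
  have hvertex := hermitianForm_add_smul_of_det_eq_zero D.pow_sq_eq_self hα hdet
  have hind : ∀ a b c : F, D.ind (a • u + b • P + c • (-β ^ p • u + α • w)) = 0 ↔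
      b ^ (p + 1) = α * a ^ (p + 1) := fun a b c => by
    rw [show a • u + b • P + c • (-β ^ p • u + α • w) =
      (a - c * β ^ p) • u + (c * α) • w + b • P by module, h, hvertex]
  have hR : LinearIndependent F ![u, P, -β ^ p • u + α • w] := by
    rw [linearIndependent_triple_iff]
    intro a b c habc
    obtain ⟨ha, hc, hb⟩ := linearIndependent_triple_iff.1 hE (a - c * β ^ p) (c * α) b
      (by rw [← habc]; module)
    obtain rfl : c = 0 := (mul_eq_zero.1 hc).resolve_right hα₀
    exact ⟨by simpa using ha, hb, rfl⟩
  rw [← D.card_lineZeros_of_mem_iff_pow_eq hP hα₀ fun c => ?_]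
  · refine D.isPencil_of_vertex D.finrank_eq hR hP fun y hy c => ?_
    obtain ⟨a, b, d, rfl⟩ := exists_eq_combination D.finrank_eq hR y
    rw [hind] at hy
    rwa [add_assoc, ← add_smul, hind]
  · have hc := hind 1 c 0
    rwa [one_smul, zero_smul, add_zero, one_pow, mul_one, ← D.mem_lineZeros] at hc

theorem isHermitianCurve_or_isLine_or_isPencil_of_ind_eq_zero_iff
    (hE : LinearIndependent F ![u, w, P]) (hP : D.ind P = 1) (hα : α ^ p = α) (hδ : δ ^ p = δ)
    (h : ∀ a b c : F, D.ind (a • u + b • w + c • P) = 0 ↔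
      c ^ (p + 1) = hermitianForm p α β δ (a, b)) :
    D.IsHermitianCurve p ∨ D.IsLine ∨ D.IsPencil (p + 1) := by
  have hp := (Fact.out : p.Prime).ne_zero
  by_cases hdet : α * δ = β ^ (p + 1)
  swap
  · exact .inl (D.isHermitianCurve_of_ind_eq_zero_iff hE hα hδ hdet h)
  right
  rcases eq_or_ne α 0 with rfl | hα₀
  swap
  · exact .inr (D.isPencil_of_ind_eq_zero_iff hE hP hα hα₀ hdet h)
  obtain rfl : β = 0 := eq_zero_of_pow_eq_zero (hdet.symm.trans (zero_mul δ))
  have h' : ∀ a b c : F, D.ind (a • u + b • w + c • P) = 0 ↔ c ^ (p + 1) = δ * b ^ (p + 1) :=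
    fun a b c => by rw [h, hermitianForm, zero_pow hp, zero_mul, zero_mul, zero_mul, zero_add,
      zero_add, zero_add]
  rcases eq_or_ne δ 0 with rfl | hδ₀
  · left
    refine D.isLine_of_ind_eq_zero_iff hE fun a b c => ?_
    rw [h', zero_mul, pow_eq_zero_iff p.succ_ne_zero]
  · right
    have hE' : LinearIndependent F ![w, u, P] := by
      rw [linearIndependent_triple_iff] at hE ⊢
      intro a b c habc
      obtain ⟨hb, ha, hc⟩ := hE b a c (by rw [← habc]; module)
      exact ⟨ha, hb, hc⟩
    refine D.isPencil_of_ind_eq_zero_iff (β := 0) (δ := 0) hE' hP hδ hδ₀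
      (by rw [mul_zero, zero_pow p.succ_ne_zero]) fun a b c => ?_
    rw [add_comm (a • w), h', hermitianForm, zero_pow hp]
    ring_nf

theorem exists_lineCoeff_comb_eq_hermitianForm (hP : D.ind P = 1) (u w : E) :
    ∃ α β δ : F, α ^ p = α ∧ δ ^ p = δ ∧
      (fun x : F × F => D.lineCoeff (p + 1) P (comb u w x)) = hermitianForm p α β δ := by
  have := D.charP
  have hp := D.four_lt
  set c := fun i => D.weight i * D.form i P ^ (Fintype.card F - 1 - (p + 1))
  refine exists_eq_hermitianForm (by omega) D.pow_sq_eq_self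
    (a := ∑ i, c i * (-D.form i u) ^ (p + 1))
    (b := ∑ i, c i * (-D.form i u * (-D.form i w) ^ p))
    (c := ∑ i, c i * (-D.form i w * (-D.form i u) ^ p))
    (d := ∑ i, c i * (-D.form i w) ^ (p + 1)) (fun x => ?_)
    fun x => D.lineCoeff_succ_char_pow_char hP _
  simp only [CodeCone.lineCoeff, sum_mul, ← sum_add_distrib]
  refine sum_congr rfl fun i _ => ?_
  have hform : -D.form i (comb u w x) = x.1 * -D.form i u + x.2 * -D.form i w := by
    simp only [comb_apply, map_add, map_smul, smul_eq_mul]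
    ring
  rw [hform, pow_succ (x.1 * -D.form i u + x.2 * -D.form i w), add_pow_char, mul_pow, mul_pow,
    pow_succ x.1, pow_succ x.2, pow_succ (-D.form i u), pow_succ (-D.form i w)]
  ring

theorem isHermitianCurve_or_isLine_or_isPencil_of_isFlatAt
    (hflat : ∀ P, D.ind P = 1 → D.IsFlatAt P) :
    D.IsHermitianCurve p ∨ D.IsLine ∨ D.IsPencil (p + 1) := by
  obtain ⟨P, hP⟩ := D.exists_ind_eq_one
  obtain ⟨u, w, hT⟩ := D.exists_isPolarTriple D.finrank_eq hP
  obtain ⟨α, β, δ, hα, hδ, hform⟩ := D.exists_lineCoeff_comb_eq_hermitianForm hP u w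
  refine D.isHermitianCurve_or_isLine_or_isPencil_of_ind_eq_zero_iff (β := β)
    hT.linearIndependent hP hα hδ fun a b c => ?_
  have hind := D.ind_comb_add_smul hflat hT (a, b) c
  rw [congrFun hform (a, b), comb_apply] at hind
  rw [hind, ite_eq_left_iff, imp_iff_not (one_ne_zero (α := F)), not_not]

end SmallPlaneSection

section NewtonCoeff

variable {F : Type*} [Field F]

/-- The solution of the recursion given by Newton's identities with prescribed power sums `c`. In
characteristic `p` it determines the coefficients of the polynomial below degree `p` only; at `p`
the value is `0`, as the recursion divides by `p`. -/
noncomputable def newtonCoeff (c : ℕ → F) : ℕ → F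
  | 0 => 1
  | l + 1 => -((l + 1 : ℕ) : F)⁻¹ * ∑ i : Fin (l + 1), newtonCoeff c i * c (l + 1 - i)

theorem newtonCoeff_zero (c : ℕ → F) : newtonCoeff c 0 = 1 := by rw [newtonCoeff]

theorem newtonCoeff_succ (c : ℕ → F) (l : ℕ) : newtonCoeff c (l + 1) =
    -((l + 1 : ℕ) : F)⁻¹ * ∑ i ∈ range (l + 1), newtonCoeff c i * c (l + 1 - i) := by
  rw [newtonCoeff, ← Fin.sum_univ_eq_sum_range fun i => newtonCoeff c i * c (l + 1 - i)]

theorem sum_mul_mem_binaryForm {f g : ℕ → F × F → F} {m n : ℕ} (hm : m ≤ n + 1)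
    (hf : ∀ i < m, f i ∈ binaryForm F i) (hg : ∀ i < m, g i ∈ binaryForm F (n - i)) :
    (fun x => ∑ i ∈ range m, f i x * g i x) ∈ binaryForm F n := by
  have h : ∀ i ∈ range m, f i * g i ∈ binaryForm F n := fun i hi => by
    have hi := mem_range.1 hi
    have h := mul_mem_binaryForm (hf i hi) (hg i hi)
    rwa [Nat.add_sub_cancel' (by omega)] at h
  convert Submodule.sum_mem _ h using 1
  ext x
  simp only [Finset.sum_apply, Pi.mul_apply]

theorem newtonCoeff_mem_binaryForm {c : ℕ → F × F → F} (hc : ∀ k, c k ∈ binaryForm F k) (l : ℕ) :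
    (fun x => newtonCoeff (c · x) l) ∈ binaryForm F l := by
  induction l using Nat.strong_induction_on with
  | _ l ih =>
  rcases l with _ | l
  · simp only [newtonCoeff_zero]
    exact const_mem_binaryForm 1
  · simp only [newtonCoeff_succ]
    exact Submodule.smul_mem _ (-((l + 1 : ℕ) : F)⁻¹)
      (sum_mul_mem_binaryForm (Nat.le_succ _) ih fun i _ => hc _)

/-- The polynomial `c 2 * ∏ (T - a)`, over a set of `p + 1` elements `a` with power sums `c`,
expressed through `c` alone. Newton's identity for `p` does not determine the coefficient of `T`,
but the one for `p + 2` determines its product with `c 2`. -/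
noncomputable def newtonPoly (p : ℕ) (c : ℕ → F) (T : F) : F :=
  c 2 * ∑ i ∈ range (p + 2), newtonCoeff c i * T ^ (p + 1 - i) -
    (∑ i ∈ range (p + 1), newtonCoeff c i * c (p + 2 - i)) * T

theorem newtonPoly_mem_binaryForm (p : ℕ) {c : ℕ → F × F → F} (hc : ∀ k, c k ∈ binaryForm F k)
    {f : F × F → F} (hf : f ∈ binaryForm F 1) :
    (fun x => newtonPoly p (c · x) (f x)) ∈ binaryForm F (p + 3) := by
  have hnewton := newtonCoeff_mem_binaryForm hc
  have hpow : ∀ n, (fun x => f x ^ n) ∈ binaryForm F n := fun n => by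
    have h := pow_mem_binaryForm hf n
    rwa [mul_one] at h
  have hleft := mul_mem_binaryForm (hc 2) (sum_mul_mem_binaryForm (n := p + 1) le_rfl
    (fun i (_ : i < p + 2) => hnewton i) fun i _ => hpow (p + 1 - i))
  have hright := mul_mem_binaryForm (sum_mul_mem_binaryForm (n := p + 2) (by omega)
    (fun i (_ : i < p + 1) => hnewton i) fun i _ => hc (p + 2 - i)) hf
  rw [show 2 + (p + 1) = p + 3 by ring] at hleft
  exact Submodule.sub_mem _ hleft hright

theorem sum_rootCoeff_mul_sum_pow_eq_zero {A : Finset F} {n : ℕ} (hn : #A ≤ n) :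
    ∑ i ∈ range (#A + 1), rootCoeff A i * ∑ a ∈ A, a ^ (n - i) = 0 := by
  simp only [mul_sum]
  rw [sum_comm]
  refine sum_eq_zero fun a ha => ?_
  have hroot := eval_rootPoly_eq_zero_iff.2 ha
  rw [eval_rootPoly] at hroot
  calc ∑ i ∈ range (#A + 1), rootCoeff A i * a ^ (n - i)
      = (∑ i ∈ range (#A + 1), rootCoeff A i * a ^ (#A - i)) * a ^ (n - #A) := by
        rw [sum_mul]
        refine sum_congr rfl fun i hi => ?_
        have := mem_range.1 hi
        rw [mul_assoc, ← pow_add]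
        congr 2
        omega
    _ = 0 := by rw [hroot, zero_mul]

variable {p : ℕ} [CharP F p] {A : Finset F} {c : ℕ → F}

theorem newtonCoeff_char : ∀ {p : ℕ} [CharP F p], p ≠ 0 → newtonCoeff c p = 0
  | l + 1, _, _ => by
    rw [newtonCoeff_succ, CharP.cast_eq_zero F (l + 1), _root_.inv_zero, neg_zero, zero_mul]

theorem newtonCoeff_eq_rootCoeff (hc : ∀ k, k ≠ 0 → k ≤ #A → c k = ∑ a ∈ A, a ^ k) {l : ℕ}
    (hl : l < p) (hlA : l ≤ #A) : newtonCoeff c l = rootCoeff A l := by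
  induction l using Nat.strong_induction_on with
  | _ l ih =>
  rcases l with _ | l
  · rw [newtonCoeff_zero, rootCoeff_zero]
  · have hne := natCast_ne_zero_of_lt_char F p l.succ_ne_zero hl
    rw [newtonCoeff_succ, neg_mul, ← mul_neg, inv_mul_eq_iff_eq_mul₀ hne,
      natCast_mul_rootCoeff hlA]
    refine congrArg Neg.neg (sum_congr rfl fun i hi => ?_)
    have hi := mem_range.1 hi
    rw [ih i hi (by omega) (by omega), hc _ (by omega) (by omega)]

theorem newtonCoeff_succ_char (hp : p ≠ 0) (hA : #A = p + 1)
    (hc : ∀ k, k ≠ 0 → k ≤ #A → c k = ∑ a ∈ A, a ^ k) (hc₁ : c 1 = 0) :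
    newtonCoeff c (p + 1) = rootCoeff A (p + 1) := by
  have hrec := natCast_mul_rootCoeff (A := A) (l := p + 1) hA.ge
  have hsum : ∑ i ∈ range p, newtonCoeff c i * c (p + 1 - i) =
      ∑ i ∈ range p, rootCoeff A i * ∑ a ∈ A, a ^ (p + 1 - i) := sum_congr rfl fun i hi => by
    have hi := mem_range.1 hi
    rw [newtonCoeff_eq_rootCoeff hc hi (by omega), hc _ (by omega) (by omega)]
  rw [Nat.cast_succ, CharP.cast_eq_zero, zero_add, one_mul, sum_range_succ,
    Nat.add_sub_cancel_left, ← hc 1 one_ne_zero (by omega), hc₁, mul_zero, add_zero] at hrec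
  rw [newtonCoeff_succ, Nat.cast_succ, CharP.cast_eq_zero, zero_add, inv_one, sum_range_succ,
    newtonCoeff_char hp, zero_mul, add_zero, hsum, hrec, neg_one_mul]

theorem newtonPoly_eq (hp : p ≠ 0) (hA : #A = p + 1)
    (hc : ∀ k, k ≠ 0 → k ≤ #A + 1 → c k = ∑ a ∈ A, a ^ k) (hc₁ : c 1 = 0) (T : F) :
    newtonPoly p c T = c 2 * (rootPoly A).eval T := by
  have hc' : ∀ k, k ≠ 0 → k ≤ #A → c k = ∑ a ∈ A, a ^ k := fun k h₀ hk => hc k h₀ (by omega)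
  have hlow : ∀ i ∈ range p, newtonCoeff c i = rootCoeff A i := fun i hi => by
    have hi := mem_range.1 hi
    exact newtonCoeff_eq_rootCoeff hc' hi (by omega)
  have hcoeff : ∑ i ∈ range (p + 1), newtonCoeff c i * c (p + 2 - i) = -(c 2 * rootCoeff A p) := by
    have hrec := sum_rootCoeff_mul_sum_pow_eq_zero (A := A) (n := p + 2) (by omega)
    rw [hA, sum_range_succ, sum_range_succ, show p + 2 - (p + 1) = 1 by omega,
      ← hc 1 one_ne_zero (by omega), hc₁, Nat.add_sub_cancel_left,
      ← hc 2 two_ne_zero (by omega)] at hrec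
    rw [sum_range_succ, newtonCoeff_char hp, sum_congr rfl fun i hi => by
      have := mem_range.1 hi
      rw [hlow i hi, hc _ (by omega) (by omega)]]
    linear_combination hrec
  rw [newtonPoly, hcoeff, eval_rootPoly, hA, sum_range_succ, sum_range_succ,
    sum_congr rfl fun i hi => by rw [hlow i hi], newtonCoeff_char hp,
    newtonCoeff_succ_char hp hA hc' hc₁, sum_range_succ _ (p + 1), sum_range_succ _ p,
    Nat.add_sub_cancel_left]
  ring

end NewtonCoeff

namespace CodeCone

variable {F E : Type*} [Field F] [Fintype F] [AddCommGroup E] [Module F E] (D : CodeCone F E)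
  {X : E}

theorem card_filter_ind_dir (hX : D.ind X = 0) (w : E) :
    #{d : Option F | D.ind (comb X w (dir d)) = 0} = #(D.lineZeros X w) + 1 := by
  rw [card_filter, Fintype.sum_option, lineZeros, card_filter, add_comm]
  simp only [dir_none, dir_some, comb_apply, zero_smul, one_smul, add_zero, hX, if_true,
    add_comm w]

end CodeCone

namespace SmallPlaneSection

variable {F E : Type*} [Field F] [Fintype F] [AddCommGroup E] [Module F E] {p : ℕ}
  (D : SmallPlaneSection F E p) {P X v u w : E} {f : F × F → F}

local notation "q" => Fintype.card F

theorem exists_lineCoeff_two_ne_zero (hT : D.IsPolarTriple P u w) (hP : ¬ D.IsFlatAt P) :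
    ∃ x : F × F, D.lineCoeff 2 P (comb u w x) ≠ 0 := by
  obtain ⟨v, hv⟩ := not_forall.1 hP
  obtain ⟨a, b, c, hx⟩ :=
    exists_eq_combination D.finrank_eq hT.linearIndependent (v + D.lineCoeff 1 P v • P)
  have h₁ := D.lineCoeff_one_shift hT.ind_eq_one v
  have h₂ := D.lineCoeff_two_shift D.two_lt_card hT.ind_eq_one v
  rw [hx, ← comb_apply u w (a, b)] at h₁ h₂
  have hc : c = 0 := by
    rw [D.lineCoeff_one_add, hT.lineCoeff_one_comb, D.lineCoeff_smul, D.lineCoeff_one_self,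
      hT.ind_eq_one] at h₁
    linear_combination -h₁
  rw [hc, zero_smul, add_zero] at h₂
  exact ⟨(a, b), by rw [h₂]; exact sub_ne_zero.2 hv⟩

theorem card_filter_lineCoeff_two_le (hT : D.IsPolarTriple P u w) (hP : ¬ D.IsFlatAt P) :
    #{d : Option F | D.lineCoeff 2 P (comb u w (dir d)) = 0} ≤ 2 := by
  obtain ⟨x, hx⟩ := D.exists_lineCoeff_two_ne_zero hT hP
  by_contra! hlt
  exact hx (congrFun (eq_zero_of_mem_binaryForm (D.lineCoeff_comb_mem_binaryForm 2 P u w)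
    (fun d hd => (mem_filter.1 hd).2) hlt) x)

variable [Fact p.Prime]

theorem card_tangentDirs_le_two (hT : D.IsPolarTriple P u w) (hP : ¬ D.IsFlatAt P) :
    #(D.tangentDirs P u w) ≤ 2 := by
  obtain ⟨x, hx⟩ := D.exists_lineCoeff_two_ne_zero hT hP
  exact D.card_tangentDirs_le hT two_ne_zero D.two_lt_card hx

theorem newtonPoly_lineCoeff (hP : D.ind P = 1) (hv : D.lineCoeff 1 P v = 0)
    (hκ : D.kappa P v ≤ 1) (T : F) : newtonPoly p (D.lineCoeff · P v) T =
      D.lineCoeff 2 P v * (rootPoly (D.lineZeros P v)).eval T := by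
  have := D.charP
  have hp := D.four_lt
  have hq := D.five_mul_le_card
  rcases Nat.le_one_iff_eq_zero_or_eq_one.1 hκ with hκ | hκ
  · have hzero := fun k => D.lineCoeff_eq_zero_of_kappa_eq_zero hP hv hκ (k := k)
    have hsum : ∑ i ∈ range (p + 1), newtonCoeff (D.lineCoeff · P v) i *
        D.lineCoeff (p + 2 - i) P v = 0 := sum_eq_zero fun i hi => by
      have := mem_range.1 hi
      rw [hzero _ (by omega) (by omega), mul_zero]
    rw [newtonPoly, hzero 2 two_ne_zero D.two_lt_card, hsum]
    ring
  · have hA : #(D.lineZeros P v) = p + 1 := by rw [D.card_lineZeros hP, hκ, mul_one, add_comm]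
    exact newtonPoly_eq (by omega) hA (fun k _ hk => D.lineCoeff_eq_sum_pow hP v (by omega)) hv T

theorem newtonPoly_lineCoeff_eq_zero (hT : D.IsPolarTriple P u w) (hP : ¬ D.IsFlatAt P)
    (hf : f ∈ binaryForm F 1)
    (hS : p + 5 < #{d : Option F | D.ind (comb u w (dir d) + f (dir d) • P) = 0}) (x : F × F) :
    newtonPoly p (D.lineCoeff · P (comb u w x)) (f x) = 0 := by
  refine congrFun (eq_zero_of_mem_binaryForm
    (S := ({d | D.ind (comb u w (dir d) + f (dir d) • P) = 0} : Finset (Option F)) \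
      D.badDirs P u w)
    (newtonPoly_mem_binaryForm p (fun k => D.lineCoeff_comb_mem_binaryForm k P u w) hf)
    (fun d hd => ?_) ?_) x
  · rw [mem_sdiff, mem_filter, badDirs, mem_filter] at hd
    rw [D.newtonPoly_lineCoeff hT.ind_eq_one (hT.lineCoeff_one_comb _) (by grind),
      eval_rootPoly_eq_zero_iff.2 (D.mem_lineZeros.2 hd.1.2), mul_zero]
  · have := le_card_sdiff (D.badDirs P u w)
      {d : Option F | D.ind (comb u w (dir d) + f (dir d) • P) = 0}
    have := D.card_badDirs_le hT.linearIndependent hT.ind_eq_one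
    have := D.card_tangentDirs_le_two hT hP
    omega

/- On a line off `P` with many points of the cone, every point that does not lie on one of the four
exceptional lines through `P` belongs to the cone. -/
theorem card_le_card_filter_ind_add_three (hT : D.IsPolarTriple P u w) (hP : ¬ D.IsFlatAt P)
    (hf : f ∈ binaryForm F 1)
    (hS : p + 5 < #{d : Option F | D.ind (comb u w (dir d) + f (dir d) • P) = 0}) :
    q ≤ #{d : Option F | D.ind (comb u w (dir d) + f (dir d) • P) = 0} + 3 := by
  have hcover : (univ : Finset (Option F)) ⊆
      ({d | D.ind (comb u w (dir d) + f (dir d) • P) = 0} : Finset (Option F)) ∪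
        (D.badDirs P u w ∪
          ({d | D.lineCoeff 2 P (comb u w (dir d)) = 0} : Finset (Option F))) := fun d _ => by
    have hzero := D.newtonPoly_lineCoeff_eq_zero hT hP hf hS (dir d)
    rw [mem_union, mem_union, badDirs, mem_filter_univ, mem_filter_univ, mem_filter_univ]
    by_contra! h
    rw [D.newtonPoly_lineCoeff hT.ind_eq_one (hT.lineCoeff_one_comb _) (by omega), mul_eq_zero,
      or_iff_right h.2.2, eval_rootPoly_eq_zero_iff, D.mem_lineZeros] at hzero
    exact h.1 hzero
  have hcard := (card_le_card hcover).trans ((card_union_le _ _).trans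
    (Nat.add_le_add_left (card_union_le _ _) _))
  rw [card_univ, Fintype.card_option] at hcard
  have := D.card_badDirs_le hT.linearIndependent hT.ind_eq_one
  have := D.card_tangentDirs_le_two hT hP
  have := D.card_filter_lineCoeff_two_le hT hP
  omega

theorem lineZeros_eq_univ_of_two_mul_le (h : LinearIndependent F ![X, w, P]) (hP : D.ind P = 1)
    (hflat : ¬ D.IsFlatAt P) (hX : D.ind X = 0) (hcard : 2 * p ≤ #(D.lineZeros X w)) :
    D.lineZeros X w = univ := by
  have hp := D.four_lt
  have hline : ∀ x : F × F, comb X w x =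
      comb (X + D.lineCoeff 1 P X • P) (w + D.lineCoeff 1 P w • P) x +
        (-D.lineCoeff 1 P X * x.1 + -D.lineCoeff 1 P w * x.2) • P := fun x => by
    simp only [comb_apply]
    module
  have hS := D.card_filter_ind_dir hX w
  have hlarge := D.card_le_card_filter_ind_add_three (D.isPolarTriple_shift h hP) hflat
    (linear_mem_binaryForm (-D.lineCoeff 1 P X) (-D.lineCoeff 1 P w))
  simp only [← hline, hS] at hlarge
  have hle := hlarge (by omega)
  obtain ⟨k, hk⟩ := D.dvd_card_lineZeros hX w
  have hupper := card_le_univ (D.lineZeros X w)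
  rw [hk, D.card_field, sq] at hle hupper
  have hkp : k ≤ p := Nat.le_of_mul_le_mul_left hupper (by omega)
  have hpk : p < k + 1 := Nat.lt_of_mul_lt_mul_left (a := p) (by rw [mul_add]; omega)
  rw [← card_eq_iff_eq_univ, hk, D.card_field, sq, show k = p by omega]

theorem lineZeros_eq_univ_or_card_eq (h : LinearIndependent F ![X, w, P]) (hP : D.ind P = 1)
    (hflat : ¬ D.IsFlatAt P) (hX : D.ind X = 0) :
    D.lineZeros X w = univ ∨ #(D.lineZeros X w) = p ∨ D.lineZeros X w = ∅ := by
  rcases Nat.lt_or_ge #(D.lineZeros X w) (2 * p) with hlt | hge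
  · right
    obtain ⟨k, hk⟩ := D.dvd_card_lineZeros hX w
    rw [hk, mul_comm] at hlt
    have hk₂ : k < 2 := Nat.lt_of_mul_lt_mul_right hlt
    interval_cases k
    · exact .inr (card_eq_zero.1 hk)
    · exact .inl (hk.trans (mul_one p))
  · exact .inl (D.lineZeros_eq_univ_of_two_mul_le h hP hflat hX hge)

end SmallPlaneSection

namespace CodeCone

variable {F E : Type*} [Field F] [Fintype F] [AddCommGroup E] [Module F E] (D : CodeCone F E)
  {P X w : E}

theorem ind_comb_of_lineZeros_eq_univ (hX : D.ind X = 0) (h : D.lineZeros X w = univ)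
    (x : F × F) : D.ind (comb X w x) = 0 := by
  obtain ⟨a, b⟩ := x
  rw [comb_apply]
  rcases eq_or_ne b 0 with rfl | hb
  · have ha : a ∈ D.lineZeros X 0 := by
      rw [D.lineZeros_zero_of_ind_eq_zero hX]
      exact mem_univ a
    rwa [zero_smul, add_comm, ← mem_lineZeros]
  · have hab : a / b ∈ D.lineZeros X w := h ▸ mem_univ _
    rwa [mem_lineZeros, ← D.ind_smul hb, smul_add, smul_smul, mul_div_cancel₀ _ hb,
      add_comm] at hab

theorem linearIndependent_pair_of_ind (hP : D.ind P = 1) (hX : D.ind X = 0) (hX₀ : X ≠ 0) :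
    LinearIndependent F ![P, X] := by
  rw [LinearIndependent.pair_symm_iff, LinearIndependent.pair_iff' hX₀]
  rintro a rfl
  rcases eq_or_ne a 0 with rfl | ha
  · rw [zero_smul, ind_zero] at hP
    exact zero_ne_one hP
  · rw [D.ind_smul ha, hX] at hP
    exact zero_ne_one hP

theorem exists_linearIndependent_of_ind (hE : finrank F E = 3) (hP : D.ind P = 1)
    (hX : D.ind X = 0) (hX₀ : X ≠ 0) : ∃ w, LinearIndependent F ![X, w, P] := by
  obtain ⟨w, hw⟩ :=
    exists_linearIndependent_triple_of_pair hE (D.linearIndependent_pair_of_ind hP hX hX₀)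
  exact ⟨w, linearIndependent_triple_rotate (linearIndependent_triple_rotate hw)⟩

end CodeCone

namespace SmallPlaneSection

variable {F E : Type*} [Field F] [Fintype F] [AddCommGroup E] [Module F E] {p : ℕ}
  (D : SmallPlaneSection F E p) {P X R v u w : E}

local notation "q" => Fintype.card F

theorem kappa_comb_add_smul (P u w : E) (a b : F) (x : F × F) :
    D.kappa P (comb (u + a • P) (w + b • P) x) = D.kappa P (comb u w x) := by
  rw [comb_apply, show x.1 • (u + a • P) + x.2 • (w + b • P) =
    comb u w x + (x.1 * a + x.2 * b) • P by rw [comb_apply]; module, kappa_add_smul]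

variable [Fact p.Prime]

theorem card_tangentDirs_le_two_of_not_isFlatAt (h : LinearIndependent F ![u, w, P])
    (hP : D.ind P = 1) (hflat : ¬ D.IsFlatAt P) : #(D.tangentDirs P u w) ≤ 2 := by
  have hcard := D.card_tangentDirs_le_two (D.isPolarTriple_shift h hP) hflat
  simpa only [tangentDirs, kappa_comb_add_smul] using hcard

theorem kappa_le_three (h : LinearIndependent F ![u, w, P]) (hP : D.ind P = 1)
    (hflat : ¬ D.IsFlatAt P) : D.kappa P u ≤ 3 := by
  have hexcess : D.kappa P (comb u w (dir none)) - 1 ≤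
      ∑ d : Option F, (D.kappa P (comb u w (dir d)) - 1) :=
    single_le_sum (f := fun d : Option F => D.kappa P (comb u w (dir d)) - 1)
      (fun _ _ => Nat.zero_le _) (mem_univ none)
  rw [dir_none, comb_apply, one_smul, zero_smul, add_zero] at hexcess
  have := D.card_tangentDirs_le_two_of_not_isFlatAt h hP hflat
  have := D.sum_kappa_add_card_tangentDirs P u w
  have := D.sum_kappa_le h hP
  omega

theorem card_lineZeros_swap (hP : D.ind P = 1) (hX : D.ind X = 0) :
    #(D.lineZeros X P) = p * D.kappa P X := by
  have hzero : (0 : F) ∈ D.lineZeros P X := by rw [D.mem_lineZeros, zero_smul, add_zero, hX]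
  rw [D.lineZeros_swap hP, card_image_of_injective _ inv_injective, card_erase_of_mem hzero,
    D.card_lineZeros hP, Nat.add_sub_cancel_left]

/- Both sides count the points of the cone off the line through `X` and `P`, by the lines through
`X` and by the lines through `P`. -/
theorem sum_card_lineZeros (h : LinearIndependent F ![X, w, P]) (hP : D.ind P = 1)
    (hX : D.ind X = 0) : ∑ s : F, #(D.lineZeros X (w + s • P)) =
      q + p * ∑ s : F, D.kappa P (w + s • X) := by
  have hq : 0 < q - 1 := Nat.sub_pos_of_lt Fintype.one_lt_card
  have hcount := D.ncard_cone D.finrank_eq (linearIndependent_triple_reverse h)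
  rw [D.ncard_cone_of_ind_eq_one h hP, D.lineZeros_zero_of_ind_eq_zero hX, card_univ] at hcount
  simp only [Fintype.sum_option, dir_none, dir_some, comb_apply, one_smul, zero_smul, add_zero,
    D.card_lineZeros_swap hP hX, add_comm _ w] at hcount
  obtain ⟨m, hm⟩ : ∃ m, q = m + 1 := ⟨q - 1, by omega⟩
  rw [hm, Nat.add_sub_cancel] at hcount hq
  rw [hm]
  refine Nat.eq_of_mul_eq_mul_left hq ?_
  linear_combination hcount.symm

theorem exists_lineZeros_eq_univ (h : LinearIndependent F ![X, w, P]) (hP : D.ind P = 1)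
    (hflat : ¬ D.IsFlatAt P) (hX : D.ind X = 0) : ∃ s : F, D.lineZeros X (w + s • P) = univ := by
  by_contra! hne
  have hp := D.four_lt
  have hle : ∀ s ∈ (univ : Finset F), #(D.lineZeros X (w + s • P)) ≤ p := fun s _ => by
    have hs := linearIndependent_triple_add_smul h 0 s
    rw [zero_smul, add_zero] at hs
    rcases D.lineZeros_eq_univ_or_card_eq hs hP hflat hX with hfull | hcard | hempty
    · exact absurd hfull (hne s)
    · exact hcard.le
    · rw [hempty, card_empty]
      exact Nat.zero_le p
  have hsum := sum_le_card_nsmul _ _ _ hle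
  rw [D.sum_card_lineZeros h hP hX, card_univ, smul_eq_mul, mul_comm q] at hsum
  have hκ := D.sum_kappa_add_card_tangentDirs P X w
  simp only [Fintype.sum_option, dir_none, dir_some, comb_apply, one_smul, zero_smul, add_zero,
    add_comm _ w] at hκ
  have htan := D.card_tangentDirs_le_two_of_not_isFlatAt h hP hflat
  have hthree := D.kappa_le_three h hP hflat
  have hlow : p * q ≤ p * (∑ s : F, D.kappa P (w + s • X) + 4) :=
    Nat.mul_le_mul_left p (by omega)
  have hq := D.five_mul_le_card
  linarith

/- Every point of the cone lies on a line contained in the cone. This line meets the line through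
`w` and `R`, which has no point on the cone besides `R`; hence it passes through `R`. -/
theorem ind_add_smul_of_lineZeros_eq_empty (hP : D.ind P = 1) (hflat : ¬ D.IsFlatAt P)
    (hR : D.ind R = 0) (hw : D.lineZeros R w = ∅) (hX : D.ind X = 0) (T : F) :
    D.ind (X + T • R) = 0 := by
  rcases eq_or_ne X 0 with rfl | hX₀
  · rw [← D.mem_lineZeros, D.lineZeros_zero_of_ind_eq_zero hR]
    exact mem_univ T
  obtain ⟨u, hu⟩ := D.exists_linearIndependent_of_ind D.finrank_eq hP hX hX₀
  obtain ⟨s, hs⟩ := D.exists_lineZeros_eq_univ hu hP hflat hX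
  have hline := D.ind_comb_of_lineZeros_eq_univ hX hs
  have hu' := linearIndependent_triple_add_smul hu 0 s
  rw [zero_smul, add_zero] at hu'
  obtain ⟨a, b, c, rfl⟩ := exists_eq_combination D.finrank_eq hu' R
  obtain ⟨a', b', c', rfl⟩ := exists_eq_combination D.finrank_eq hu' w
  have hc : c = 0 := by
    by_contra hc
    have hmem : -(c' / c) ∈ D.lineZeros (a • X + b • (u + s • P) + c • P)
        (a' • X + b' • (u + s • P) + c' • P) := by
      rw [D.mem_lineZeros, ← hline (a' - c' / c * a, b' - c' / c * b), comb_apply]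
      congr 1
      match_scalars <;> field_simp <;> ring
    rw [hw] at hmem
    exact notMem_empty _ hmem
  rw [← hline (1 + T * a, T * b), comb_apply, hc]
  congr 1
  module

theorem isPencil_of_forall_ind_add_smul (hP : D.ind P = 1) (hflat : ¬ D.IsFlatAt P) (hR₀ : R ≠ 0)
    (hR : ∀ X, D.ind X = 0 → ∀ T : F, D.ind (X + T • R) = 0) : D.IsPencil (p + 1) := by
  have hindR : D.ind R = 0 := by
    have h := hR 0 D.ind_zero 1
    rwa [one_smul, zero_add] at h
  have hq := D.two_lt_card
  obtain ⟨w, h⟩ := D.exists_linearIndependent_of_ind D.finrank_eq hP hindR hR₀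
  have hshift : ∀ s : F, D.kappa P (s • R + w) = D.kappa P w := fun s => by
    have hzeros : D.lineZeros P (s • R + w) = D.lineZeros P w := by
      ext T
      rw [D.mem_lineZeros, D.mem_lineZeros]
      refine ⟨fun hT => ?_, fun hT => ?_⟩
      · convert hR _ hT (-s) using 2
        module
      · convert hR _ hT s using 2
        module
    rw [kappa, hzeros, kappa]
  have hsome : ∀ d : F, D.kappa P (comb R w (dir (some d))) = D.kappa P w := fun d => by
    rw [dir_some, comb_apply, one_smul, hshift]
  have hlarge : ∀ S : Finset (Option F), (∀ d : F, some d ∈ S) → q ≤ #S := fun S hS => by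
    rw [← card_univ, ← card_map Function.Embedding.some]
    exact card_le_card (map_subset_iff_subset_preimage.2 fun d _ => mem_preimage.2 (hS d))
  have htan := D.card_tangentDirs_le_two_of_not_isFlatAt h hP hflat
  have hbad := D.card_badDirs_le h hP
  have hκ : D.kappa P w = 1 := by
    by_contra hκ
    rcases Nat.lt_or_gt_of_ne hκ with hκ | hκ
    · have := hlarge (D.tangentDirs P R w) fun d => by
        rw [tangentDirs, mem_filter_univ, hsome]
        omega
      omega
    · have := hlarge (D.badDirs P R w) fun d => by
        rw [badDirs, mem_filter_univ, hsome]
        omega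
      omega
  have hpencil := D.isPencil_of_vertex D.finrank_eq (linearIndependent_triple_rotate h) hP hR
  rwa [D.card_lineZeros hP, hκ, mul_one, add_comm] at hpencil

theorem kappa_eq_one_of_forall_lineZeros_nonempty (h : LinearIndependent F ![u, w, P])
    (hP : D.ind P = 1)
    (hne : ∀ X w, X ≠ 0 → D.ind X = 0 → (D.lineZeros X w).Nonempty) (d : Option F) :
    D.kappa P (comb u w (dir d)) = 1 := by
  have hpos : ∀ d : Option F, D.kappa P (comb u w (dir d)) ≠ 0 := fun d hd => by
    obtain ⟨a, ha⟩ := D.lineZeros_nonempty hP (comb u w (dir d))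
    rw [D.mem_lineZeros] at ha
    have hX₀ : comb u w (dir d) + a • P ≠ 0 := fun h₀ => by
      obtain ⟨h₁, h₂, -⟩ := linearIndependent_triple_iff.1 h _ _ _ h₀
      exact dir_ne_zero d (Prod.ext h₁ h₂)
    have hcard := D.card_lineZeros_swap hP ha
    rw [kappa_add_smul, hd, mul_zero, card_eq_zero] at hcard
    exact (hne _ P hX₀ ha).ne_empty hcard
  have htan : #(D.tangentDirs P u w) = 0 :=
    card_eq_zero.2 (filter_eq_empty_iff.2 fun d _ => hpos d)
  have hbad : D.badDirs P u w = ∅ :=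
    card_eq_zero.1 (Nat.le_zero.1 ((D.card_badDirs_le h hP).trans htan.le))
  have hle := filter_eq_empty_iff.1 hbad (mem_univ d)
  have := hpos d
  omega

theorem exists_lineZeros_eq_empty (hP : D.ind P = 1) (hflat : ¬ D.IsFlatAt P) :
    ∃ X w, X ≠ 0 ∧ D.ind X = 0 ∧ D.lineZeros X w = ∅ := by
  by_contra! hne
  have hp := D.four_lt
  obtain ⟨u, w, h⟩ := exists_linearIndependent_triple_of_ne_zero D.finrank_eq
    (D.ne_zero_of_ind_eq_one hP)
  obtain ⟨a, ha⟩ := D.lineZeros_nonempty hP u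
  rw [D.mem_lineZeros] at ha
  have hX := linearIndependent_triple_add_smul h a 0
  rw [zero_smul, add_zero] at hX
  set X := u + a • P
  have hcard : ∀ s : F, #(D.lineZeros X (w + s • P)) =
      p + p * if D.lineZeros X (w + s • P) = univ then p - 1 else 0 := fun s => by
    have hs := linearIndependent_triple_add_smul hX 0 s
    rw [zero_smul, add_zero] at hs
    split_ifs with hfull
    · rw [hfull, card_univ, D.card_field, ← mul_one_add, Nat.add_sub_cancel' (by omega), sq]
    · have := (D.lineZeros_eq_univ_or_card_eq hs hP hflat ha).resolve_left hfull
      exact (this.resolve_right (hne X _ (hX.ne_zero 0) ha).ne_empty).trans (add_zero p).symm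
  have hκ : ∀ s : F, D.kappa P (w + s • X) = 1 := fun s => by
    have hone := D.kappa_eq_one_of_forall_lineZeros_nonempty hX hP hne (some s)
    rwa [dir_some, comb_apply, one_smul, add_comm] at hone
  have hsum := D.sum_card_lineZeros hX hP ha
  simp only [hcard, hκ, sum_add_distrib, ← mul_sum, sum_const, ← sum_filter, card_univ, smul_eq_mul,
    mul_one, D.card_field] at hsum
  set f := #{s : F | D.lineZeros X (w + s • P) = univ}
  have hdvd : f * (p - 1) = p := Nat.eq_of_mul_eq_mul_left (by omega : 0 < p) (by linarith)
  rcases (Nat.dvd_prime Fact.out).1 (Dvd.intro_left f hdvd) with h | h <;> omega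

theorem isPencil_of_not_isFlatAt (hP : D.ind P = 1) (hflat : ¬ D.IsFlatAt P) :
    D.IsPencil (p + 1) := by
  obtain ⟨R, w, hR₀, hR, hw⟩ := D.exists_lineZeros_eq_empty hP hflat
  exact D.isPencil_of_forall_ind_add_smul hP hflat hR₀ fun X hX T =>
    D.ind_add_smul_of_lineZeros_eq_empty hP hflat hR hw hX T

theorem isHermitianCurve_or_isLine_or_isPencil :
    D.IsHermitianCurve p ∨ D.IsLine ∨ D.IsPencil (p + 1) := by
  by_cases hflat : ∀ P, D.ind P = 1 → D.IsFlatAt P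
  · exact D.isHermitianCurve_or_isLine_or_isPencil_of_isFlatAt hflat
  · push Not at hflat
    obtain ⟨P, hP, hflat⟩ := hflat
    exact .inr (.inr (D.isPencil_of_not_isFlatAt hP hflat))

end SmallPlaneSection

section Dual

variable {F E : Type*} [Field F] [AddCommGroup E] [Module F E]

theorem exists_ker_eq_of_finrank_add_one_eq {H : Submodule F E}
    (hH : finrank F H + 1 = finrank F E) : ∃ f : Dual F E, LinearMap.ker f = H := by
  have : Module.Finite F E := Module.finite_of_finrank_pos (by omega)
  have hlt : H < ⊤ := lt_top_iff_ne_top.2 fun h => by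
    rw [h, finrank_top] at hH
    omega
  obtain ⟨f, hf, hle⟩ := Submodule.exists_le_ker_of_lt_top H hlt
  have hker := Module.Dual.finrank_ker_add_one_of_ne_zero hf
  exact ⟨f, (Submodule.eq_of_le_of_finrank_eq hle (by omega)).symm⟩

theorem natCast_natCard_eq_zero [Finite F] (hE : 0 < finrank F E) : (Nat.card E : F) = 0 := by
  have := Fintype.ofFinite F
  have : Module.Finite F E := Module.finite_of_finrank_pos hE
  rw [Module.natCard_eq_pow_finrank (K := F), Nat.card_eq_fintype_card, Nat.cast_pow,
    FiniteField.cast_card_eq_zero, zero_pow hE.ne']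

theorem sum_one_sub_pow_card_sub_one [Fintype F] [Fintype E] (hE : 1 < finrank F E)
    (f : Dual F E) : ∑ x, (1 - f x ^ (Fintype.card F - 1)) = 0 := by
  have hker : 0 < finrank F (LinearMap.ker f) := by
    have := LinearMap.finrank_range_add_finrank_ker f
    have := (LinearMap.range f).finrank_le
    rw [finrank_self] at this
    omega
  rw [← natCast_natCard_eq_zero hker, Nat.card_eq_fintype_card, Fintype.card_subtype,
    natCast_card_filter]
  refine sum_congr rfl fun x _ => ?_
  rw [pow_card_sub_one_eq_ite, LinearMap.mem_ker]
  split_ifs <;> ring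

end Dual

section ProjPoint

variable {F : Type} [Field F] {n : ℕ}

/-- The projective point spanned by a nonzero vector. -/
def projPoint (x : Fin n → F) (hx : x ≠ 0) : ProjPoint F n :=
  ⟨Submodule.span F {x}, finrank_span_singleton hx⟩

/-- The vectors representing the points of `V`, together with `0`. -/
def cone (V : Set (ProjPoint F n)) : Set (Fin n → F) :=
  {x | ∀ hx : x ≠ 0, projPoint x hx ∈ V}

theorem eq_projPoint {P : ProjPoint F n} {x : Fin n → F} (hx : x ≠ 0) (h : x ∈ P.1) :
    P = projPoint x hx :=
  Subtype.ext (Submodule.eq_of_le_of_finrank_eq ((Submodule.span_singleton_le_iff_mem x P.1).2 h)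
    (by rw [finrank_span_singleton hx, P.2])).symm

theorem exists_eq_projPoint (P : ProjPoint F n) : ∃ x hx, P = projPoint x hx := by
  obtain ⟨⟨x, hxP⟩, hx, -⟩ := finrank_eq_one_iff'.1 P.2
  have hx₀ : x ≠ 0 := fun h => hx (Subtype.ext h)
  exact ⟨x, hx₀, eq_projPoint hx₀ hxP⟩

theorem projPoint_mem_pointsIn {x : Fin n → F} {hx : x ≠ 0} {W : Submodule F (Fin n → F)} :
    projPoint x hx ∈ pointsIn F n W ↔ x ∈ W :=
  Submodule.span_singleton_le_iff_mem x W

theorem ext_projPoint {U V : Set (ProjPoint F n)}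
    (h : ∀ x (hx : x ≠ 0), projPoint x hx ∈ U ↔ projPoint x hx ∈ V) : U = V := by
  ext P
  obtain ⟨x, hx, rfl⟩ := exists_eq_projPoint P
  exact h x hx

theorem zero_mem_cone (V : Set (ProjPoint F n)) : (0 : Fin n → F) ∈ cone V :=
  fun h => absurd rfl h

theorem cone_inter_pointsIn (V : Set (ProjPoint F n)) (W : Submodule F (Fin n → F)) :
    cone (V ∩ pointsIn F n W) = cone V ∩ W := by
  ext x
  rcases eq_or_ne x 0 with rfl | hx
  · exact iff_of_true (zero_mem_cone _) ⟨zero_mem_cone V, W.zero_mem⟩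
  · simp only [cone, Set.mem_inter_iff, Set.mem_ofPred_eq, projPoint_mem_pointsIn, SetLike.mem_coe,
      forall_prop_of_true hx]

instance [Finite F] : Finite (ProjPoint F n) := Subtype.finite

variable [Fintype F]

theorem ncard_cone (V : Set (ProjPoint F n)) :
    (cone V).ncard = V.ncard * (Fintype.card F - 1) + 1 := by
  choose rep hrep₀ hrep using exists_eq_projPoint (F := F) (n := n)
  have hunit : ∀ (P : ProjPoint F n) (a : Fˣ),
      ∃ h : a • rep P ≠ 0, projPoint (a • rep P) h = P := fun P a => by
    have h : a • rep P ≠ 0 := (smul_ne_zero_iff_ne a).2 (hrep₀ P)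
    refine ⟨h, (eq_projPoint h ?_).symm⟩
    have hmem : rep P ∈ (projPoint (rep P) (hrep₀ P)).1 := Submodule.mem_span_singleton_self _
    rw [← hrep P] at hmem
    exact Submodule.smul_mem _ (a : F) hmem
  have himage : cone V \ {0} =
      (fun x : ProjPoint F n × Fˣ => x.2 • rep x.1) '' (V ×ˢ Set.univ) := by
    ext x
    constructor
    · rintro ⟨hxV, hx⟩
      have hmem : x ∈ (projPoint x hx).1 := Submodule.mem_span_singleton_self x
      rw [hrep (projPoint x hx)] at hmem
      obtain ⟨a, ha⟩ := Submodule.mem_span_singleton.1 hmem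
      have ha₀ : a ≠ 0 := by
        rintro rfl
        exact hx (by rw [← ha, zero_smul]; rfl)
      exact ⟨(projPoint x hx, Units.mk0 a ha₀), ⟨hxV hx, trivial⟩, ha⟩
    · rintro ⟨⟨P, a⟩, ⟨hP, -⟩, rfl⟩
      obtain ⟨h, hPa⟩ := hunit P a
      exact ⟨fun _ => by rwa [hPa], h⟩
  have hinj : Function.Injective fun x : ProjPoint F n × Fˣ => x.2 • rep x.1 := by
    rintro ⟨P, a⟩ ⟨P', b⟩ h
    obtain ⟨h₁, hPa⟩ := hunit P a
    obtain ⟨h₂, hPb⟩ := hunit P' b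
    simp only at h
    obtain rfl : P = P' := by
      rw [← hPa, ← hPb]
      simp only [h]
    exact Prod.ext rfl (Units.ext (smul_left_injective F (hrep₀ P) h))
  rw [← Set.ncard_sdiff_singleton_add_one (zero_mem_cone V), himage,
    Set.ncard_image_of_injective _ hinj, Set.ncard_prod, Set.ncard_univ, Nat.card_eq_fintype_card,
    Fintype.card_units]

end ProjPoint

section Code

variable {F : Type} [Field F] [Fintype F] {p n : ℕ} [CharP F p] {V : Set (ProjPoint F n)}

local notation "q" => Fintype.card F

theorem exists_sum_eq_ite_of_mem_hypCode (hn : n ≠ 0) (hcode : charVec F p n V ∈ hypCode F p n) :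
    ∃ (N : ℕ) (a : Fin N → F) (f : Fin N → Dual F (Fin n → F)), ∀ x (hx : x ≠ 0),
      ∑ i, a i * (1 - f i x ^ (q - 1)) = if projPoint x hx ∈ V then 1 else 0 := by
  obtain ⟨N, a, g, hg⟩ := Submodule.mem_span_set'.1 hcode
  choose H hH hgH using fun i => (g i).2
  choose f hf using fun i => exists_ker_eq_of_finrank_add_one_eq (H := H i)
    (by rw [hH, finrank_fin_fun, Nat.sub_add_cancel (Nat.pos_of_ne_zero hn)])
  let φ := ZMod.castHom (dvd_refl p) F
  have hφ : ∀ S P, φ (charVec F p n S P) = if P ∈ S then 1 else 0 := fun S P => by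
    rw [charVec, Set.indicator_apply, Pi.one_apply, apply_ite φ, map_one, map_zero]
  refine ⟨N, fun i => φ (a i), f, fun x hx => ?_⟩
  rw [← hφ, ← hg, Finset.sum_apply, map_sum]
  refine sum_congr rfl fun i _ => ?_
  rw [Pi.smul_apply, smul_eq_mul, map_mul, hgH, hφ, pow_card_sub_one_eq_ite]
  simp only [projPoint_mem_pointsIn, ← hf, LinearMap.mem_ker]
  split_ifs <;> ring

/- Summing over all vectors: a hyperplane contributes `0`, hence the value at `0` of the
combination, which is the sum of the weights, cancels the number of nonzero vectors of the cone. -/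
theorem sum_eq_natCast_ncard (hn : 1 < n) {N : ℕ} {a : Fin N → F}
    {f : Fin N → Dual F (Fin n → F)} (h : ∀ x (hx : x ≠ 0),
      ∑ i, a i * (1 - f i x ^ (q - 1)) = if projPoint x hx ∈ V then 1 else 0) :
    ∑ i, a i = V.ncard := by
  have hq : 1 < q := Fintype.one_lt_card
  have hterm : ∀ x, ∑ i, a i * (1 - f i x ^ (q - 1)) =
      (if x ∈ cone V then 1 else 0) + if x = 0 then ∑ i, a i - 1 else 0 := fun x => by
    rcases eq_or_ne x 0 with rfl | hx
    · simp only [map_zero, zero_pow (Nat.sub_ne_zero_of_lt hq), sub_zero, mul_one,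
        if_pos (zero_mem_cone V), if_true, add_sub_cancel]
    · simp only [h x hx, cone, Set.mem_ofPred_eq, forall_prop_of_true hx, if_neg hx, add_zero]
  have hsum := sum_congr rfl fun x (_ : x ∈ univ) => hterm x
  rw [sum_comm, sum_eq_zero fun i _ => by
    rw [← mul_sum, sum_one_sub_pow_card_sub_one (by rwa [finrank_fin_fun]), mul_zero],
    sum_add_distrib, sum_ite_eq' univ 0, if_pos (mem_univ _), ← natCast_card_filter,
    ← Set.ncard_coe_finset, coe_filter_univ, Set.ofPred_mem_eq, ncard_cone, Nat.cast_add,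
    Nat.cast_mul, Nat.cast_sub hq.le, FiniteField.cast_card_eq_zero] at hsum
  push_cast at hsum
  linear_combination -hsum

theorem exists_codeCone (hn : 1 < n) (hV : V.ncard ≡ 1 [MOD p])
    (hcode : charVec F p n V ∈ hypCode F p n) :
    ∃ D : CodeCone F (Fin n → F), ∀ x, D.ind x = 0 ↔ x ∈ cone V := by
  have hq : 1 < q := Fintype.one_lt_card
  obtain ⟨N, a, f, h⟩ := exists_sum_eq_ite_of_mem_hypCode (by omega) hcode
  have hweight : ∑ i, a i = 1 := by
    rw [sum_eq_natCast_ncard hn h, ← Nat.cast_one, CharP.natCast_eq_natCast F p]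
    exact hV
  have hind : ∀ x, ∑ i, a i * f i x ^ (q - 1) = if x ∈ cone V then 0 else 1 := fun x => by
    rcases eq_or_ne x 0 with rfl | hx
    · simp only [map_zero, zero_pow (Nat.sub_ne_zero_of_lt hq), mul_zero, sum_const_zero,
        if_pos (zero_mem_cone V)]
    · have hx' := h x hx
      simp only [mul_sub, mul_one, sum_sub_distrib, hweight] at hx'
      simp only [cone, Set.mem_ofPred_eq, forall_prop_of_true hx]
      split_ifs at hx' ⊢ <;> linear_combination -hx'
  refine ⟨⟨N, a, f, fun x => ?_⟩, fun x => ?_⟩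
  · rw [hind]
    exact ite_eq_or_eq _ _ _
  · rw [CodeCone.ind, hind]
    exact ite_eq_left_iff.trans ⟨fun h => by_contra fun hx => one_ne_zero (h hx), absurd⟩

end Code

namespace CodeCone

variable {F E : Type*} [Field F] [Fintype F] [AddCommGroup E] [Module F E]

/-- The section of a code cone by a subspace. -/
def restrict (D : CodeCone F E) (W : Submodule F E) : CodeCone F W where
  n := D.n
  weight := D.weight
  form i := D.form i ∘ₗ W.subtype
  zero_or_one y := D.zero_or_one y

theorem ind_restrict (D : CodeCone F E) {W : Submodule F E} (y : W) :
    (D.restrict W).ind y = D.ind (y : E) :=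
  rfl

end CodeCone

section PlaneSection

variable {F : Type} [Field F] {n : ℕ} {V : Set (ProjPoint F n)} {π : Submodule F (Fin n → F)}

theorem ncard_cone_comap_subtype [Fintype F] :
    {y : π | (y : Fin n → F) ∈ cone V}.ncard = secant F n V π * (Fintype.card F - 1) + 1 := by
  rw [secant, ← ncard_cone, cone_inter_pointsIn,
    ← Set.ncard_image_of_injective _ π.injective_subtype]
  congr 1
  ext x
  exact ⟨fun ⟨y, hy, hyx⟩ => hyx ▸ ⟨hy, y.2⟩, fun ⟨hxV, hxπ⟩ => ⟨⟨x, hxπ⟩, hxV, rfl⟩⟩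

theorem exists_smallPlaneSection [Fintype F] {p : ℕ} [Fact p.Prime] (hp4 : 4 < p)
    (hF : Fintype.card F = p ^ 2) (hV : V.ncard ≡ 1 [MOD p])
    (hcode : charVec F p n V ∈ hypCode F p n) (hπ : finrank F π = 3)
    (hsize : secant F n V π ≤ p ^ 3 + p ^ 2 + p + 1) :
    ∃ D : SmallPlaneSection F π p, ∀ y : π, D.ind y = 0 ↔ (y : Fin n → F) ∈ cone V := by
  have := charP_of_card_eq_prime_pow hF
  have hn : 3 ≤ n := by simpa only [hπ, finrank_fin_fun] using π.finrank_le
  obtain ⟨D, hD⟩ := exists_codeCone (by omega) hV hcode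
  refine ⟨⟨D.restrict π, hp4, hF, hπ, ?_⟩, fun y => hD y⟩
  simp only [CodeCone.ind_restrict, hD, ncard_cone_comap_subtype, hF]
  gcongr

end PlaneSection

namespace CodeCone

variable {F : Type} [Field F] [Fintype F] {n : ℕ} {U : Set (ProjPoint F n)}
  {π : Submodule F (Fin n → F)} {D : CodeCone F π}

/-- The zeros of `D` in the plane `π` are the vectors of the points of `U`. -/
def IsConeOver (D : CodeCone F π) (U : Set (ProjPoint F n)) : Prop :=
  ∀ x (hx : x ≠ 0), projPoint x hx ∈ U ↔ ∃ y : π, (y : Fin n → F) = x ∧ D.ind y = 0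

theorem isConeOver_inter_pointsIn {V : Set (ProjPoint F n)}
    (hD : ∀ y : π, D.ind y = 0 ↔ (y : Fin n → F) ∈ cone V) :
    D.IsConeOver (V ∩ pointsIn F n π) := fun x hx => by
  constructor
  · rintro ⟨hxV, hxπ⟩
    exact ⟨⟨x, projPoint_mem_pointsIn.1 hxπ⟩, rfl, (hD _).2 fun _ => hxV⟩
  · rintro ⟨y, rfl, hy⟩
    exact ⟨(hD y).1 hy hx, projPoint_mem_pointsIn.2 y.2⟩

namespace IsConeOver

theorem isClassicalUnital {p : ℕ} (hU : D.IsConeOver U) (hD : D.IsHermitianCurve p) :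
    IsClassicalUnital F p n π U := by
  obtain ⟨e, A, hdet, hA, he⟩ := hD
  refine ⟨π.subtype ∘ₗ e.toLinearMap, ?_, ?_, A, hdet, hA, ext_projPoint fun x hx => ?_⟩
  · exact LinearMap.ker_eq_bot.2 (π.injective_subtype.comp e.injective)
  · rw [LinearMap.range_comp, LinearEquiv.range, Submodule.map_top, Submodule.range_subtype]
  rw [hU x hx]
  constructor
  · rintro ⟨y, rfl, hy⟩
    obtain ⟨z, rfl⟩ := e.surjective y
    refine ⟨z, ?_, rfl, (he z).1 hy⟩
    rintro rfl
    exact hx (by rw [map_zero, Submodule.coe_zero])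
  · rintro ⟨z, -, hz, hAz⟩
    have hxz : x ∈ Submodule.span F {(e z : Fin n → F)} := hz ▸ Submodule.mem_span_singleton_self x
    obtain ⟨s, rfl⟩ := Submodule.mem_span_singleton.1 hxz
    refine ⟨s • e z, rfl, ?_⟩
    rw [D.ind_smul (left_ne_zero_of_smul hx), he]
    exact hAz

theorem exists_eq_pointsIn (hU : D.IsConeOver U) (hD : D.IsLine) :
    ∃ l : Submodule F (Fin n → F), l ≤ π ∧ finrank F l = 2 ∧ U = pointsIn F n l := by
  obtain ⟨l, hl, hzero⟩ := hD
  refine ⟨l.map π.subtype, Submodule.map_subtype_le π l,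
    (Submodule.finrank_map_subtype_eq π l).trans hl, ext_projPoint fun x hx => ?_⟩
  simp only [hU x hx, projPoint_mem_pointsIn, hzero, Submodule.mem_map, Submodule.subtype_apply,
    and_comm]

theorem exists_eq_iUnion_pointsIn {m : ℕ} (hU : D.IsConeOver U) (hD : D.IsPencil m) :
    ∃ L : Finset (Submodule F (Fin n → F)), #L = m ∧ (∀ l ∈ L, l ≤ π ∧ finrank F l = 2) ∧
      (∃ P : ProjPoint F n, ∀ l ∈ L, P.1 ≤ l) ∧ U = ⋃ l ∈ L, pointsIn F n l := by
  obtain ⟨L, hcard, hL, ⟨R, hR, hRL⟩, hzero⟩ := hD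
  refine ⟨L.image (·.map π.subtype), ?_, ?_, ⟨projPoint (R : Fin n → F) ?_, ?_⟩,
    ext_projPoint fun x hx => ?_⟩
  · rw [card_image_of_injective _ (Submodule.map_injective_of_injective π.injective_subtype),
      hcard]
  · exact forall_mem_image.2 fun l hl =>
      ⟨Submodule.map_subtype_le π l, (Submodule.finrank_map_subtype_eq π l).trans (hL l hl)⟩
  · exact fun h => hR (Subtype.ext h)
  · exact forall_mem_image.2 fun l hl =>
      projPoint_mem_pointsIn.2 (Submodule.mem_map_of_mem (hRL l hl))
  · simp only [hU x hx, hzero, Set.mem_iUnion, exists_prop, exists_mem_image,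
      projPoint_mem_pointsIn, Submodule.mem_map, Submodule.subtype_apply]
    exact ⟨fun ⟨y, hy, l, hl, hyl⟩ => ⟨l, hl, y, hyl, hy⟩,
      fun ⟨l, hl, y, hyl, hy⟩ => ⟨y, hy, l, hl, hyl⟩⟩

end IsConeOver

end CodeCone

theorem ncard_modEq_one_of_isQuasiHermitian {F : Type} [Field F] {p r : ℕ} (hr : r ≠ 0)
    {V : Set (ProjPoint F (r + 1))} (hV : IsQuasiHermitian F p r V) : V.ncard ≡ 1 [MOD p] := by
  have hcast := congrArg (Int.cast : ℤ → ZMod p) hV.1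
  push_cast at hcast
  rw [CharP.cast_eq_zero (ZMod p) p, zero_pow two_ne_zero, zero_pow hr,
    zero_pow r.succ_ne_zero] at hcast
  have hsign : (-1 : ZMod p) ^ r * (-1) ^ r = 1 := by rw [← mul_pow, neg_mul_neg, one_mul, one_pow]
  rw [← ZMod.natCast_eq_natCast_iff, Nat.cast_one]
  linear_combination -hcast + hsign

end HyperplaneCode

open HyperplaneCode in
theorem stmt14_general (p n : ℕ) (hp : p.Prime) (hp4 : 4 < p)
    (F : Type) [Field F] [Fintype F] (hF : Fintype.card F = p ^ 2)
    (V : Set (ProjPoint F n)) (hV : V.ncard ≡ 1 [MOD p])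
    (hcode : charVec F p n V ∈ hypCode F p n)
    (π : Submodule F (Fin n → F)) (hπ : finrank F π = 3)
    (hsize : secant F n V π ≤ p ^ 3 + p ^ 2 + p + 1) :
    IsClassicalUnital F p n π (V ∩ pointsIn F n π) ∨
    (∃ ℓ : Submodule F (Fin n → F), ℓ ≤ π ∧ finrank F ℓ = 2 ∧
      V ∩ pointsIn F n π = pointsIn F n ℓ) ∨
    (∃ L : Finset (Submodule F (Fin n → F)), L.card = p + 1 ∧
      (∀ ℓ ∈ L, ℓ ≤ π ∧ finrank F ℓ = 2) ∧
      (∃ P : ProjPoint F n, ∀ ℓ ∈ L, P.1 ≤ ℓ) ∧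
      V ∩ pointsIn F n π = ⋃ ℓ ∈ L, pointsIn F n ℓ) := by
  have : Fact p.Prime := ⟨hp⟩
  obtain ⟨D, hD⟩ := exists_smallPlaneSection hp4 hF hV hcode hπ hsize
  have hcone := CodeCone.isConeOver_inter_pointsIn hD
  exact D.isHermitianCurve_or_isLine_or_isPencil.imp hcone.isClassicalUnital
    (Or.imp hcone.exists_eq_pointsIn hcone.exists_eq_iUnion_pointsIn)

/-- in PG(r, p²) with `r ≥ 4` and `p > 4` prime, if a plane `π` meets
`V` in at most `p³ + p² + p + 1` points, then `π ∩ V` is a classical unital of `π`, a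
single line of `π`, or the union of `p + 1` distinct concurrent lines of `π`. -/
theorem stmt14 (p r : ℕ) (hp : p.Prime) (hp4 : 4 < p) (hr : 4 ≤ r)
    (F : Type) [Field F] [Fintype F] (hF : Fintype.card F = p ^ 2)
    (V : Set (ProjPoint F (r + 1))) (hV : IsQuasiHermitian F p r V)
    (hcode : charVec F p (r + 1) V ∈ hypCode F p (r + 1))
    (π : Submodule F (Fin (r + 1) → F)) (hπ : finrank F π = 3)
    (hsize : secant F (r + 1) V π ≤ p ^ 3 + p ^ 2 + p + 1) :
    IsClassicalUnital F p (r + 1) π (V ∩ pointsIn F (r + 1) π) ∨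
    (∃ ℓ : Submodule F (Fin (r + 1) → F), ℓ ≤ π ∧ finrank F ℓ = 2 ∧
      V ∩ pointsIn F (r + 1) π = pointsIn F (r + 1) ℓ) ∨
    (∃ L : Finset (Submodule F (Fin (r + 1) → F)), L.card = p + 1 ∧
      (∀ ℓ ∈ L, ℓ ≤ π ∧ finrank F ℓ = 2) ∧
      (∃ P : ProjPoint F (r + 1), ∀ ℓ ∈ L, P.1 ≤ ℓ) ∧
      V ∩ pointsIn F (r + 1) π = ⋃ ℓ ∈ L, pointsIn F (r + 1) ℓ) :=
  stmt14_general p (r + 1) hp hp4 F hF V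
    (HyperplaneCode.ncard_modEq_one_of_isQuasiHermitian (by omega) hV) hcode π hπ hsize
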